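/- arXiv:1406.4679 — 3 statements merged into one kernel-verified Lean document; each statement's English description precedes it below -/
import Mathlib

section
/- For every integer k ≥ 2 there exist a constant ε > 0 and positive integers n_0, m_0 such that for all n ≥ n_0 and m ≥ m_0 there exist binary relational structures A_n and B_m over a common vocabulary with |V(A_n)| = n and |V(B_m)| = m such that a CSP-refutation of (A_n, B_m) of width at most k−1 exists and depth^k(A_n, B_m) ≥ ε · n^(k−1) · m^(k−1). -/
/-- A relational structure over the vocabulary `ι` (a type of relation symbols)
with universe `V`: each relation symbol is interpreted as a set of tuples
(lists) over `V`. -/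
structure RelStruct (ι V : Type) where
  rel : ι → List V → Prop

namespace CSP

variable {ι α β : Type}

/-- A finite set of pairs is a partial map if it is functional. -/
def Functional (p : Finset (α × β)) : Prop :=
  ∀ ⦃x : α⦄ ⦃y y' : β⦄, (x, y) ∈ p → (x, y') ∈ p → y = y'

/-- `p` is a partial homomorphism from `A` to `B`: it is a partial map, and every
tuple of elements of its domain that belongs to a relation of `A` is mapped
coordinatewise to a tuple of the corresponding relation of `B`. -/
def PartialHom (A : RelStruct ι α) (B : RelStruct ι β) (p : Finset (α × β)) : Prop :=
  Functional p ∧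
  ∀ (R : ι) (t : List α) (t' : List β),
    List.Forall₂ (fun x y => (x, y) ∈ p) t t' → A.rel R t → B.rel R t'

/-- A structure is binary if all of its relations consist of tuples of arity at most 2. -/
def Binary (A : RelStruct ι α) : Prop := ∀ R t, A.rel R t → t.length ≤ 2

/-- `Deriv A B w p d` holds iff the partial map `p` has a CSP-derivation of width at
most `w` and depth at most `d`: axioms are the partial maps that are not partial
homomorphisms (of any depth), and a non-axiom line `p` with `|p| ≤ w` may be derived
from the premises `p'_b ∪ {x ↦ b}` (for all `b ∈ V(B)`), where each `p'_b ⊆ p`,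
increasing the depth by one. -/
inductive Deriv [DecidableEq α] [DecidableEq β]
    (A : RelStruct ι α) (B : RelStruct ι β) (w : ℕ) :
    Finset (α × β) → ℕ → Prop
  | ax {p : Finset (α × β)} {d : ℕ} :
      Functional p → ¬ PartialHom A B p → Deriv A B w p d
  | rule {p : Finset (α × β)} {d : ℕ} (x : α) (prem : β → Finset (α × β)) :
      Functional p → p.card ≤ w →
      (∀ b : β, prem b ⊆ p) →
      (∀ b : β, Deriv A B w (insert (x, b) (prem b)) d) →
      Deriv A B w p (d + 1)

end CSP

namespace CSPLB

open CSP

/-! ### Binary constraint networks given by a conflict relation -/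

section Generic

variable {α β : Type}

def stA (α : Type) : RelStruct (α × α) α := ⟨fun R t => t = [R.1, R.2]⟩

def stB (conf : α × β → α × β → Prop) : RelStruct (α × α) β :=
  ⟨fun R t => ∃ a b, t = [a, b] ∧ ¬ conf (R.1, a) (R.2, b)⟩

theorem ph_iff (conf : α × β → α × β → Prop) (p : Finset (α × β)) :
    PartialHom (stA α) (stB conf) p ↔
      Functional p ∧ ∀ u ∈ p, ∀ v ∈ p, ¬ conf u v := by
  constructor
  · rintro ⟨h1, h2⟩
    refine ⟨h1, ?_⟩
    rintro ⟨x, a⟩ hu ⟨y, b⟩ hv hc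
    obtain ⟨a', b', h, h'⟩ := h2 (x, y) [x, y] [a, b] (by simp [hu, hv]) rfl
    simp only [List.cons.injEq, and_true] at h
    obtain ⟨rfl, rfl⟩ := h
    exact h' hc
  · rintro ⟨h1, h2⟩
    refine ⟨h1, ?_⟩
    rintro ⟨x, y⟩ t t' hf (ht : t = [x, y])
    subst ht
    rcases hf with _ | ⟨hx, hf⟩
    rcases hf with _ | ⟨hy, hf⟩
    cases hf
    exact ⟨_, _, rfl, h2 _ hx _ hy⟩

theorem functional_mono {p q : Finset (α × β)} (h : Functional p) (hq : q ⊆ p) :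
    Functional q := fun _ _ _ h1 h2 => h (hq h1) (hq h2)

variable [DecidableEq α] [DecidableEq β]

theorem deriv_mono {ι : Type} {A : RelStruct ι α} {B : RelStruct ι β} {w : ℕ}
    {p : Finset (α × β)} {d : ℕ} (h : Deriv A B w p d) :
    ∀ d', d ≤ d' → Deriv A B w p d' := by
  induction h with
  | ax h1 h2 => intro d' _; exact Deriv.ax h1 h2
  | rule x prem h1 h2 h3 _ ih =>
    intro d' hd
    obtain ⟨e, rfl⟩ : ∃ e, d' = e + 1 := ⟨d' - 1, by omega⟩
    exact Deriv.rule x prem h1 h2 h3 (fun b => ih b e (by omega))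

def Der (conf : α × β → α × β → Prop) (w : ℕ) (p : Finset (α × β)) : Prop :=
  ∃ d, Deriv (stA α) (stB conf) w p d

theorem der_ax {conf : α × β → α × β → Prop} {w : ℕ} {p : Finset (α × β)}
    (h : Functional p) {u v : α × β} (hu : u ∈ p) (hv : v ∈ p) (hc : conf u v) :
    Der conf w p :=
  ⟨0, Deriv.ax h (fun hp => ((ph_iff conf p).1 hp).2 u hu v hv hc)⟩

theorem der_rule [Fintype β] {conf : α × β → α × β → Prop} {w : ℕ} {p : Finset (α × β)}
    (h : Functional p) (hw : p.card ≤ w) (x : α)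
    (H : ∀ b : β, ∃ q, q ⊆ p ∧ Der conf w (insert (x, b) q)) : Der conf w p := by
  choose q hq hd using H
  choose d hd using hd
  refine ⟨Finset.univ.sup d + 1, Deriv.rule x q h hw hq (fun b => ?_)⟩
  exact deriv_mono (hd b) _ (Finset.le_sup (f := d) (Finset.mem_univ b))

theorem functional_insert {p : Finset (α × β)} (h : Functional p) {x : α} {b : β}
    (hx : ∀ u ∈ p, u.1 ≠ x) : Functional (insert (x, b) p) := by
  intro y a a' h1 h2
  simp only [Finset.mem_insert, Prod.mk.injEq] at h1 h2
  rcases h1 with ⟨rfl, rfl⟩ | h1 <;> rcases h2 with ⟨h3, rfl⟩ | h2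
  · rfl
  · exact absurd rfl (hx _ h2)
  · exact absurd h3 (hx _ h1)
  · exact h h1 h2

/-- Transport along bijections. -/
theorem deriv_transport {α' β' : Type} [DecidableEq α'] [DecidableEq β']
    (ea : α ≃ α') (eb : β ≃ β')
    (conf : α × β → α × β → Prop) (conf' : α' × β' → α' × β' → Prop)
    (hc : ∀ u v, conf' (Prod.map ea eb u) (Prod.map ea eb v) ↔ conf u v)
    {w : ℕ} {p : Finset (α × β)} {d : ℕ} (h : Deriv (stA α) (stB conf) w p d) :
    Deriv (stA α') (stB conf') w (p.image (Prod.map ea eb)) d := by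
  have hfun : ∀ q : Finset (α × β), Functional q → Functional (q.image (Prod.map ea eb)) := by
    intro q hq x y y' h1 h2
    simp only [Finset.mem_image, Prod.exists, Prod.map_apply, Prod.mk.injEq] at h1 h2
    obtain ⟨a, b, h1, rfl, rfl⟩ := h1
    obtain ⟨a', b', h2, h3, rfl⟩ := h2
    have := ea.injective h3
    subst this
    rw [hq h1 h2]
  induction h with
  | @ax p d h1 h2 =>
    refine Deriv.ax (hfun _ h1) (fun h => h2 ?_)
    rw [ph_iff] at h ⊢
    refine ⟨h1, fun u hu v hv hcc => ?_⟩
    exact h.2 _ (Finset.mem_image_of_mem _ hu) _ (Finset.mem_image_of_mem _ hv) ((hc u v).2 hcc)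
  | @rule p d x prem h1 h2 h3 _ ih =>
    refine Deriv.rule (ea x) (fun b => (prem (eb.symm b)).image (Prod.map ea eb)) (hfun _ h1)
      (Finset.card_image_le.trans h2) (fun b => Finset.image_subset_image (h3 _)) (fun b => ?_)
    have := ih (eb.symm b)
    rw [Finset.image_insert] at this
    simpa using this

end Generic

/-! ### The concrete network -/

inductive Var (r N D : ℕ) where
  | W (j : Fin r)
  | Z (s : Fin r → Fin (r + 1)) (l : Fin r)
  | Y (i : Fin r) (o : Option (Fin N)) (f : Bool)
  | F (d : Fin D)

inductive Val (r M : ℕ) where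
  | nw (a : Fin M)
  | wild (j : Fin r)

def varEquiv (r N D : ℕ) : Var r N D ≃
    (Fin r ⊕ ((Fin r → Fin (r + 1)) × Fin r)) ⊕ ((Fin r × Option (Fin N) × Bool) ⊕ Fin D) where
  toFun := fun
    | .W j => .inl (.inl j)
    | .Z s l => .inl (.inr (s, l))
    | .Y i o f => .inr (.inl (i, o, f))
    | .F d => .inr (.inr d)
  invFun := fun
    | .inl (.inl j) => .W j
    | .inl (.inr (s, l)) => .Z s l
    | .inr (.inl (i, o, f)) => .Y i o f
    | .inr (.inr d) => .F d
  left_inv := by rintro (_ | _ | _ | _) <;> rfl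
  right_inv := by rintro ((_ | ⟨_, _⟩) | (⟨_, _, _⟩ | _)) <;> rfl

def valEquiv (r M : ℕ) : Val r M ≃ Fin M ⊕ Fin r where
  toFun := fun
    | .nw a => .inl a
    | .wild j => .inr j
  invFun := fun
    | .inl a => .nw a
    | .inr j => .wild j
  left_inv := by rintro (_ | _) <;> rfl
  right_inv := by rintro (_ | _) <;> rfl

noncomputable instance (r N D : ℕ) : DecidableEq (Var r N D) := Classical.decEq _

noncomputable instance (r M : ℕ) : DecidableEq (Val r M) := Classical.decEq _

instance (r M : ℕ) : Fintype (Val r M) := Fintype.ofEquiv _ (valEquiv r M).symm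

section Concrete

variable {r N M D : ℕ}

abbrev Node (r N M D : ℕ) := Var r N D × Val r M

/-- Digit of a value at a position. -/
def dg : Option (Fin N) → Fin M → ℕ
  | none, _ => 0
  | some p, a => 1 + (a : ℕ) * N + p

def tg (f : Bool) (d : ℕ) : ℕ := if f then d else d + 1

def info : Node r N M D → Option (Fin r × ℕ × Bool)
  | (.Z _ l, .nw _) => some (l, 0, false)
  | (.Y i o f, .nw a) => some (i, dg o a, f)
  | _ => none

def code : Val r M → Fin (r + 1)
  | .nw _ => 0
  | .wild j => j.succ

def E (x : Var r N D) (j : Fin r) (u : Node r N M D) : Prop :=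
  match x with
  | .W _ => False
  | .Z s _ => (u.1 = .W j ∧ code u.2 = s j) ∨ ∃ d f, info u = some (j, d, f)
  | .Y i o fl => ∃ d f, info u = some (j, d, f) ∧
      (j < i → if fl then d = N * M else d = 0 ∧ f = false) ∧
      (j = i → f = !fl ∧ ∃ a : Fin M, dg o a = tg fl d)
  | .F _ => ∃ f, info u = some (j, N * M, f)

def conf (u v : Node r N M D) : Prop :=
  match v with
  | (x, .wild j) => E x j u
  | (.F _, .nw _) => True
  | (.Y i o fl, .nw a) => ∃ d, info u = some (i, d, !fl) ∧
      (∃ a' : Fin M, dg o a' = tg fl d) ∧ dg o a ≠ tg fl d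
  | _ => False

def grp : Var r N D → Option (Fin r)
  | .W j => some j
  | .Z _ l => some l
  | .Y i _ _ => some i
  | .F _ => none

theorem info_grp {u : Node r N M D} {j d f} (h : info u = some (j, d, f)) : grp u.1 = some j := by
  obtain ⟨x, b⟩ := u
  cases x <;> cases b <;> simp_all [info, grp]

theorem E_grp {x : Var r N D} {u : Node r N M D} {j} (h : E x j u) : grp u.1 = some j := by
  cases x with
  | W _ => exact h.elim
  | Z s l =>
    rcases h with ⟨h, _⟩ | ⟨d, f, h⟩
    · simp [h, grp]
    · exact info_grp h
  | Y i o fl => obtain ⟨d, f, h, _⟩ := h; exact info_grp h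
  | F _ => obtain ⟨f, h⟩ := h; exact info_grp h

theorem dg_le (o : Option (Fin N)) (a : Fin M) : dg o a ≤ N * M := by
  cases o with
  | none => simp [dg]
  | some p =>
    have h1 := p.2
    have h2 : (a : ℕ) + 1 ≤ M := a.2
    have := Nat.mul_le_mul_right N h2
    simp only [dg]
    nlinarith

theorem dg_surj (hM : 0 < M) {d : ℕ} (hd : d ≤ N * M) :
    ∃ (o : Option (Fin N)) (a : Fin M), dg o a = d := by
  rcases d with _ | d
  · exact ⟨none, ⟨0, hM⟩, rfl⟩
  · have hN : 0 < N := by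
      rcases Nat.eq_zero_or_pos N with h | h
      · subst h; omega
      · exact h
    refine ⟨some ⟨d % N, Nat.mod_lt _ hN⟩, ⟨d / N, ?_⟩, ?_⟩
    · rw [Nat.div_lt_iff_lt_mul hN, mul_comm]; omega
    · have := Nat.div_add_mod d N
      simp only [dg]
      rw [mul_comm] at this
      omega

theorem dg_ne (hN : 2 ≤ N) (o : Option (Fin N)) (a a' : Fin M) : dg o a' ≠ dg o a + 1 := by
  cases o with
  | none => simp [dg]
  | some p =>
    simp only [dg]
    intro h
    have h' : (a' : ℕ) * N = (a : ℕ) * N + 1 := by omega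
    have h2 := congrArg (· % N) h'
    simp [Nat.add_mod] at h2
    omega

theorem info_le {u : Node r N M D} {j d f} (h : info u = some (j, d, f)) : d ≤ N * M := by
  obtain ⟨x, b⟩ := u
  cases x <;> cases b <;> simp [info] at h
  · omega
  · rw [← h.2.1]; exact dg_le _ _

/-! ### The counter -/

def C (B : ℕ) (t : ℕ → ℕ × Bool) : ℕ → ℕ
  | 0 => 0
  | i + 1 => (t i).1 * B ^ i + if (t i).2 then B ^ i - 1 else C B t i

theorem C_lt {B : ℕ} {t : ℕ → ℕ × Bool} (hB : 0 < B) : ∀ i, (∀ j < i, (t j).1 < B) →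
    C B t i < B ^ i := by
  intro i
  induction i with
  | zero => intro _; simp [C]
  | succ i ih =>
    intro h
    have h1 := ih (fun j hj => h j (by omega))
    have h2 : (t i).1 + 1 ≤ B := h i (by omega)
    have h3 := Nat.mul_le_mul_right (B ^ i) h2
    have h4 : 0 < B ^ i := Nat.pow_pos hB
    simp only [C, pow_succ]
    split <;> nlinarith [Nat.sub_add_cancel h4]

theorem C_zero {B : ℕ} {t : ℕ → ℕ × Bool} : ∀ i, (∀ j < i, t j = (0, false)) → C B t i = 0 := by
  intro i
  induction i with
  | zero => intro _; rfl
  | succ i ih =>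
    intro h
    simp [C, h i (by omega), ih (fun j hj => h j (by omega))]

theorem C_max {K : ℕ} {t : ℕ → ℕ × Bool} : ∀ i, (∀ j < i, (t j).1 = K) →
    C (K + 1) t i + 1 = (K + 1) ^ i := by
  intro i
  induction i with
  | zero => intro _; rfl
  | succ i ih =>
    intro h
    have h1 := ih (fun j hj => h j (by omega))
    have h4 : 0 < (K + 1) ^ i := Nat.pow_pos (by omega)
    simp only [C, h i (by omega), pow_succ]
    split <;> nlinarith [Nat.sub_add_cancel h4]

theorem C_mono {B : ℕ} {t t' : ℕ → ℕ × Bool} (hB : 0 < B) : ∀ i, (∀ j < i, (t j).1 < B) →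
    (∀ j < i, t' j = t j ∨ t' j = (0, false)) → C B t' i ≤ C B t i := by
  intro i
  induction i with
  | zero => intro _ _; exact le_rfl
  | succ i ih =>
    intro h h'
    have h1 := ih (fun j hj => h j (by omega)) (fun j hj => h' j (by omega))
    have h2 := C_lt hB i (fun j hj => h j (by omega))
    rcases h' i (by omega) with e | e
    · simp only [C, e]
      split <;> omega
    · by_cases hf : (t i).2 = true <;> simp [C, e, hf] <;> omega

theorem C_up {B : ℕ} {t t' : ℕ → ℕ × Bool} (i : ℕ) (h : C B t' i ≤ C B t i + 1) :
    ∀ n, (∀ j, i ≤ j → j < i + n → t' j = t j) → C B t' (i + n) ≤ C B t (i + n) + 1 := by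
  intro n
  induction n with
  | zero => intro _; exact h
  | succ n ih =>
    intro h'
    have h1 := ih (fun j h1 h2 => h' j h1 (by omega))
    have e := h' (i + n) (by omega) (by omega)
    show C B t' ((i + n) + 1) ≤ C B t ((i + n) + 1) + 1
    generalize i + n = k at *
    simp only [C, e]
    split <;> omega

/-! ### Lower bound: the strategy of Duplicator -/

/-- `t` is a selection of digits from the position `p`. -/
def Comp (p : Finset (Node r N M D)) (t : ℕ → ℕ × Bool) : Prop :=
  ∀ j : Fin r, t j = (0, false) ∨ ∃ u ∈ p, info u = some (j, t j)

theorem comp_mono {p q : Finset (Node r N M D)} (h : p ⊆ q) {t} (ht : Comp p t) : Comp q t :=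
  fun j => (ht j).imp id (fun ⟨u, hu, e⟩ => ⟨u, h hu, e⟩)

theorem comp_lt {p : Finset (Node r N M D)} {t} (ht : Comp p t) (j : ℕ) (hj : j < r) :
    (t j).1 < N * M + 1 := by
  rcases ht ⟨j, hj⟩ with h | ⟨u, _, h⟩
  · simp only at h; simp [h]
  · exact Nat.lt_succ_of_le (info_le h)

theorem comp_insert_none {p : Finset (Node r N M D)} {v : Node r N M D}
    (hv : ∀ j d f, info v = some (j, d, f) → (d, f) = (0, false)) {t}
    (ht : Comp (insert v p) t) : Comp p t := by
  intro j
  rcases ht j with h | ⟨u, hu, e⟩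
  · exact Or.inl h
  · rcases Finset.mem_insert.1 hu with rfl | hu
    · exact Or.inl (hv j _ _ e)
    · exact Or.inr ⟨u, hu, e⟩

theorem E_none {x : Var r N D} {j : Fin r} {u : Node r N M D} (hu : info u = none)
    (hW : ∀ j, u.1 ≠ .W j) : ¬ E x j u := by
  intro h
  cases x <;> simp [E, hu, hW] at h

theorem conf_none {u v : Node r N M D} (hu : info u = none)
    (hW : ∀ j, u.1 ≠ .W j) (hv : ¬ conf v v) : ¬ conf u v := by
  obtain ⟨x, b⟩ := v
  cases b with
  | wild j => exact E_none hu hW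
  | nw a => cases x <;> simp_all [conf]

theorem info_nw {u : Node r N M D} {z} (h : info u = some z) : ∃ a, u.2 = .nw a := by
  obtain ⟨x, b⟩ := u
  cases b with
  | nw a => exact ⟨a, rfl⟩
  | wild j => cases x <;> simp [info] at h

theorem code_surj (hM : 0 < M) (c : Fin (r + 1)) : ∃ b : Val r M, code b = c := by
  induction c using Fin.cases with
  | zero => exact ⟨.nw ⟨0, hM⟩, rfl⟩
  | succ j => exact ⟨.wild j, rfl⟩

def Good (p : Finset (Node r N M D)) : Prop :=
  Functional p ∧ ∀ u ∈ p, ∀ v ∈ p, ¬ conf u v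

theorem good_insert {p : Finset (Node r N M D)} (h : Good p) {x : Var r N D} {b : Val r M}
    (hx : ∀ u ∈ p, u.1 ≠ x) (h0 : ¬ conf (x, b) (x, b)) (h1 : ∀ u ∈ p, ¬ conf u (x, b))
    (h2 : ∀ v ∈ p, ¬ conf (x, b) v) : Good (insert (x, b) p) := by
  refine ⟨functional_insert h.1 hx, ?_⟩
  intro u hu v hv
  rcases Finset.mem_insert.1 hu with rfl | hu <;> rcases Finset.mem_insert.1 hv with rfl | hv
  · exact h0
  · exact h2 _ hv
  · exact h1 _ hu
  · exact h.2 _ hu _ hv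

/-- A choice of one node per group relevant for `x` exhausts a position of size at most `r`. -/
theorem exhaust {p : Finset (Node r N M D)} (hp : p.card ≤ r) {x : Var r N D}
    {u : Fin r → Node r N M D} (hu : ∀ j, u j ∈ p) (hE : ∀ j, E x j (u j)) :
    ∀ v ∈ p, ∃ j, u j = v := by
  have hinj : Function.Injective u := by
    intro i j h
    have h1 := E_grp (hE i)
    have h2 := E_grp (hE j)
    rw [h, h2] at h1
    exact (Option.some.inj h1).symm
  have hsub : Finset.univ.image u ⊆ p := by
    intro v hv
    simp only [Finset.mem_image, Finset.mem_univ, true_and] at hv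
    obtain ⟨j, rfl⟩ := hv
    exact hu j
  have hcard : (Finset.univ.image u).card = r := by
    rw [Finset.card_image_of_injective _ hinj]; simp
  have heq := Finset.eq_of_subset_of_card_le hsub (by omega)
  intro v hv
  rw [← heq] at hv
  simpa using hv

theorem answer (hN : 2 ≤ N) (hM : 0 < M) {p : Finset (Node r N M D)} (hp : p.card ≤ r)
    (hg : Good p) {d : ℕ}
    (hd : ∀ t, Comp p t → C (N * M + 1) t r + (d + 1) < (N * M + 1) ^ r) (x : Var r N D) :
    ∃ b : Val r M, Good (insert (x, b) p) ∧
      ∀ t, Comp (insert (x, b) p) t → C (N * M + 1) t r + d < (N * M + 1) ^ r := by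
  by_cases hx : ∃ b, (x, b) ∈ p
  · obtain ⟨b, hb⟩ := hx
    refine ⟨b, ?_⟩
    rw [Finset.insert_eq_of_mem hb]
    exact ⟨hg, fun t ht => by have := hd t ht; omega⟩
  have hx' : ∀ u ∈ p, u.1 ≠ x := by
    rintro ⟨y, b⟩ hu rfl
    exact hx ⟨b, hu⟩
  have hweak : ∀ t, Comp p t → C (N * M + 1) t r + d < (N * M + 1) ^ r :=
    fun t ht => by have := hd t ht; omega
  by_cases hW : ∃ j, x = .W j
  · obtain ⟨j, rfl⟩ := hW
    let g : Node r N M D → Fin (r + 1) := fun u =>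
      match u.1 with
      | .Z s _ => s j
      | _ => 0
    obtain ⟨c, hc⟩ : ∃ c, c ∉ p.image g := by
      by_contra hcon
      push Not at hcon
      have h1 : (p.image g) = Finset.univ := Finset.eq_univ_iff_forall.2 hcon
      have h2 := Finset.card_image_le (s := p) (f := g)
      rw [h1] at h2
      simp at h2
      omega
    obtain ⟨b, rfl⟩ := code_surj hM c
    have hinf : info ((.W j, b) : Node r N M D) = none := by cases b <;> rfl
    have hto : ∀ u : Node r N M D, ¬ conf u (.W j, b) := by
      intro u; cases b <;> simp [conf, E]
    refine ⟨b, good_insert hg hx' (hto _) (fun u _ => hto u) ?_, ?_⟩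
    · rintro ⟨y, e⟩ hv hcf
      cases e with
      | wild i =>
        cases y with
        | Z s l =>
          simp only [conf, E, hinf] at hcf
          rcases hcf with ⟨h1, h2⟩ | ⟨_, _, h⟩
          · simp only [Var.W.injEq] at h1
            subst h1
            exact hc (Finset.mem_image.2 ⟨_, hv, h2.symm⟩)
          · simp at h
        | W => simp [conf, E] at hcf
        | Y => simp [conf, E, hinf] at hcf
        | F => simp [conf, E, hinf] at hcf
      | nw a =>
        cases y with
        | F => exact hg.2 _ hv _ hv trivial
        | W => simp [conf] at hcf
        | Y => simp [conf, hinf] at hcf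
        | Z => simp [conf] at hcf
    · intro t ht
      exact hweak t (comp_insert_none (by simp [hinf]) ht)
  push Not at hW
  by_cases hE : ∀ j, ∃ u ∈ p, E x j u
  swap
  · push Not at hE
    obtain ⟨j, hj⟩ := hE
    have hinf : info ((x, .wild j) : Node r N M D) = none := by cases x <;> rfl
    refine ⟨.wild j, good_insert hg hx' ?_ hj ?_, ?_⟩
    · exact E_none hinf hW
    · exact fun v hv => conf_none hinf hW (hg.2 v hv v hv)
    · intro t ht
      exact hweak t (comp_insert_none (by simp [hinf]) ht)
  choose u hu hE using hE
  have hex := exhaust hp hu hE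
  cases x with
  | W j => exact absurd rfl (hW j)
  | F e =>
    exfalso
    choose f hf using hE
    have h1 := hd (fun j => if h : j < r then (N * M, f ⟨j, h⟩) else (0, false)) (by
      intro j
      right
      exact ⟨u j, hu j, by simpa using hf j⟩)
    have h2 := C_max (K := N * M)
      (t := fun j => if h : j < r then (N * M, f ⟨j, h⟩) else (0, false)) r
      (by intro j hj; simp [hj])
    omega
  | Z s l =>
    refine ⟨.nw ⟨0, hM⟩, good_insert hg hx' (by simp [conf]) (by simp [conf]) ?_, ?_⟩
    · intro v hv hcf
      obtain ⟨j, rfl⟩ := hex v hv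
      rcases hE j with ⟨h1, _⟩ | ⟨d', f, h⟩
      · generalize u j = v at *
        obtain ⟨y, b⟩ := v
        simp only at h1
        subst h1
        cases b <;> simp [conf, E] at hcf
      · obtain ⟨a, ha⟩ := info_nw h
        generalize u j = v at *
        obtain ⟨y, b⟩ := v
        simp only at ha
        subst ha
        cases y with
        | W => simp [conf] at hcf
        | Z => simp [conf] at hcf
        | F => simp [info] at h
        | Y i o fl =>
          simp only [conf, info, Option.some.injEq, Prod.mk.injEq] at hcf
          obtain ⟨d'', ⟨_, rfl, h3⟩, ⟨a', h4⟩, h5⟩ := hcf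
          have : fl = true := by simpa using h3
          subst this
          cases o <;> simp [dg, tg] at h4 h5
    · intro t ht
      exact hweak t (comp_insert_none (by
        intro j d' f h
        simp only [info, Option.some.injEq, Prod.mk.injEq] at h
        simp [← h.2.1, ← h.2.2]) ht)
  | Y i o fl =>
    choose dd ff hinf hlow hi using hE
    obtain ⟨hfi, a, ha⟩ := hi i rfl
    have hnew : info ((.Y i o fl, .nw a) : Node r N M D) = some (i, tg fl (dd i), fl) := by
      simp [info, ha]
    refine ⟨.nw a, good_insert hg hx' ?_ ?_ ?_, ?_⟩
    · rintro ⟨d', h1, _⟩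
      rw [hnew] at h1
      simp at h1
    · rintro v hv ⟨d', h1, _, h3⟩
      obtain ⟨j, rfl⟩ := hex v hv
      rw [hinf j] at h1
      simp only [Option.some.injEq, Prod.mk.injEq] at h1
      obtain ⟨rfl, rfl, _⟩ := h1
      exact h3 ha
    · intro v hv hcf
      obtain ⟨j, rfl⟩ := hex v hv
      have h := hinf j
      obtain ⟨e, he⟩ := info_nw h
      have hdj : j = i → dd j = dd i := by rintro rfl; rfl
      generalize u j = v at *
      obtain ⟨y, b⟩ := v
      simp only at he
      subst he
      cases y with
      | W => simp [conf] at hcf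
      | Z => simp [conf] at hcf
      | F => simp [info] at h
      | Y i' o' fl' =>
        obtain ⟨d', h1, ⟨a', h4⟩, h5⟩ := hcf
        rw [hnew] at h1
        simp only [info, Option.some.injEq, Prod.mk.injEq] at h h1
        obtain ⟨rfl, rfl, h1⟩ := h1
        obtain ⟨h6, h7, h8⟩ := h
        have h9 := hdj h6.symm
        have h10 : dg o' a' = dg o' e + 1 := by
          rw [h4, h7, h9]
          cases fl <;> cases fl' <;> simp [tg] at h1 ⊢
        exact dg_ne hN _ _ _ h10
    · intro t' ht'
      by_cases hcomp : Comp p t'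
      · exact hweak t' hcomp
      have hti : t' i = (tg fl (dd i), fl) := by
        by_contra hne
        apply hcomp
        intro j
        rcases ht' j with h | ⟨v, hv, e⟩
        · exact Or.inl h
        · rcases Finset.mem_insert.1 hv with rfl | hv
          · rw [hnew] at e
            simp only [Option.some.injEq, Prod.mk.injEq] at e
            obtain ⟨rfl, e⟩ := e
            exact absurd e.symm hne
          · exact Or.inr ⟨v, hv, e⟩
      let t : ℕ → ℕ × Bool := fun j => if h : j < r then (dd ⟨j, h⟩, ff ⟨j, h⟩) else (0, false)
      have htj : ∀ j : Fin r, t j = (dd j, ff j) := by intro j; simp [t]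
      have ht : Comp p t := by
        intro j
        right
        exact ⟨u j, hu j, by rw [htj]; exact hinf j⟩
      let t2 : ℕ → ℕ × Bool := Function.update t i (tg fl (dd i), fl)
      have htg : tg fl (dd i) < N * M + 1 := by
        rw [← ha]; exact Nat.lt_succ_of_le (dg_le _ _)
      have ht2lt : ∀ j < r, (t2 j).1 < N * M + 1 := by
        intro j hj
        by_cases hji : j = i
        · subst hji; simpa [t2] using htg
        · simpa [t2, Function.update_of_ne hji] using comp_lt ht j hj
      have hm : C (N * M + 1) t' r ≤ C (N * M + 1) t2 r := by
        apply C_mono (by omega) r ht2lt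
        intro j hj
        by_cases hji : j = i
        · subst hji; left; simp [t2, hti]
        · rcases ht' ⟨j, hj⟩ with h | ⟨v, hv, e⟩
          · exact Or.inr h
          · left
            simp only [t2, Function.update_of_ne hji]
            rcases Finset.mem_insert.1 hv with rfl | hv
            · rw [hnew] at e
              simp only [Option.some.injEq, Prod.mk.injEq] at e
              exact absurd (by rw [e.1]) hji
            · obtain ⟨j', rfl⟩ := hex v hv
              rw [hinf j'] at e
              simp only [Option.some.injEq, Prod.mk.injEq] at e
              obtain ⟨rfl, e⟩ := e
              rw [← e, ← htj]
      have hlt : ∀ j < (i : ℕ), t2 j = t j := by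
        intro j hj
        simp [t2, Function.update_of_ne (show j ≠ i by omega)]
      have hstep : C (N * M + 1) t2 (i + 1) ≤ C (N * M + 1) t (i + 1) + 1 := by
        have e1 : t2 i = (tg fl (dd i), fl) := by simp [t2]
        have e2 := htj i
        rw [hfi] at e2
        have hpos : 0 < (N * M + 1) ^ (i : ℕ) := Nat.pow_pos (by omega)
        cases fl with
        | true =>
          have h1 := C_max (K := N * M) (t := t) i (by
            intro j hj
            have := hlow ⟨j, by omega⟩ (by simpa [Fin.lt_def] using hj)
            have e := htj ⟨j, by omega⟩
            simp only at e
            rw [e]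
            simpa using this)
          simp [C, e1, e2, tg]
          omega
        | false =>
          have h1 := C_zero (B := N * M + 1) (t := t2) i (by
            intro j hj
            have := hlow ⟨j, by omega⟩ (by simpa [Fin.lt_def] using hj)
            have e := htj ⟨j, by omega⟩
            simp only at e
            rw [hlt j hj, e]
            simpa using this)
          simp [C, e1, e2, tg, h1, Nat.add_mul]
          omega
      have hup := C_up (i + 1) hstep (r - (i + 1)) (by
        intro j h1 h2
        simp [t2, Function.update_of_ne (show j ≠ i by omega)])
      rw [Nat.add_sub_cancel' (by omega)] at hup
      have := hd t ht
      omega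

theorem lower (hN : 2 ≤ N) (hM : 0 < M) {p : Finset (Node r N M D)} {d : ℕ}
    (h : Deriv (stA (Var r N D)) (stB conf) r p d) : Good p →
    ¬ ∀ t, Comp p t → C (N * M + 1) t r + d < (N * M + 1) ^ r := by
  induction h with
  | ax h1 h2 => exact fun hg => absurd ((ph_iff _ _).2 hg) h2
  | @rule p d x prem h1 h2 h3 _ ih =>
    intro hg hd
    obtain ⟨b, hb1, hb2⟩ := answer hN hM h2 hg hd x
    have hsub : insert (x, b) (prem b) ⊆ insert (x, b) p := Finset.insert_subset_insert _ (h3 b)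
    exact ih b ⟨functional_mono hb1.1 hsub, fun u hu v hv => hb1.2 u (hsub hu) v (hsub hv)⟩
      (fun t ht => hb2 t (comp_mono hsub ht))

theorem lower_empty (hN : 2 ≤ N) (hM : 0 < M) {d : ℕ}
    (h : Deriv (stA (Var r N D)) (stB (conf (M := M))) r ∅ d) : (N * M + 1) ^ r ≤ d := by
  by_contra hlt
  push Not at hlt
  refine lower hN hM h ⟨by intro x y y' h; simp at h, by simp⟩ ?_
  intro t ht
  rw [C_zero]
  · omega
  · intro j hj
    rcases ht ⟨j, hj⟩ with h | ⟨u, hu, _⟩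
    · exact h
    · simp at hu

/-! ### Upper bound: a refutation exists -/

noncomputable def pos (u : Fin r → Node r N M D) : Finset (Node r N M D) := Finset.univ.image u

theorem mem_pos (u : Fin r → Node r N M D) (v) : v ∈ pos u ↔ ∃ j, u j = v := by
  simp [pos]

theorem pos_functional {u : Fin r → Node r N M D} (hu : ∀ j, grp (u j).1 = some j) :
    Functional (pos u) := by
  intro x y y' h1 h2
  obtain ⟨j, hj⟩ := (mem_pos _ _).1 h1
  obtain ⟨j', hj'⟩ := (mem_pos _ _).1 h2
  have e1 := hu j
  have e2 := hu j'
  rw [hj] at e1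
  rw [hj'] at e2
  simp only at e1 e2
  rw [e1] at e2
  have e3 := Option.some.inj e2
  subst e3
  rw [hj] at hj'
  exact (Prod.mk.inj hj').2

theorem pos_card (u : Fin r → Node r N M D) : (pos u).card ≤ r :=
  Finset.card_image_le.trans (by simp)

theorem step {u : Fin r → Node r N M D} (hE' : ∀ j, grp (u j).1 = some j) (x : Var r N D)
    (i : Fin r) (hE : ∀ j, E x j (u j)) (hx : ∀ j, (u j).1 ≠ x)
    (h : ∀ a, ¬ conf (u i) (x, .nw a) → Der conf r (pos (Function.update u i (x, .nw a)))) :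
    Der conf r (pos u) := by
  have hx' : ∀ v ∈ pos u, v.1 ≠ x := by
    intro v hv
    obtain ⟨j, rfl⟩ := (mem_pos _ _).1 hv
    exact hx j
  have hfun := pos_functional hE'
  refine der_rule hfun (pos_card u) x (fun b => ?_)
  cases b with
  | wild j =>
    refine ⟨pos u, subset_rfl, der_ax (functional_insert hfun hx') (u := u j)
      (v := (x, .wild j)) ?_ ?_ (hE j)⟩
    · exact Finset.mem_insert_of_mem ((mem_pos _ _).2 ⟨j, rfl⟩)
    · exact Finset.mem_insert_self _ _
  | nw a =>
    by_cases hc : conf (u i) (x, .nw a)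
    · refine ⟨pos u, subset_rfl, der_ax (functional_insert hfun hx') (u := u i)
        (v := (x, .nw a)) ?_ ?_ hc⟩
      · exact Finset.mem_insert_of_mem ((mem_pos _ _).2 ⟨i, rfl⟩)
      · exact Finset.mem_insert_self _ _
    · refine ⟨(Finset.univ.erase i).image u, Finset.image_subset_image (Finset.subset_univ _), ?_⟩
      have := h a hc
      convert this using 1
      ext v
      simp only [Finset.mem_insert, Finset.mem_image, Finset.mem_erase, Finset.mem_univ, and_true,
        mem_pos]
      constructor
      · rintro (rfl | ⟨j, hj, rfl⟩)
        · exact ⟨i, by simp⟩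
        · exact ⟨j, by simp [Function.update_of_ne hj]⟩
      · rintro ⟨j, rfl⟩
        by_cases hj : j = i
        · subst hj; left; simp
        · right; exact ⟨j, hj, by simp [Function.update_of_ne hj]⟩

variable (N M D) in
/-- All positions with the digits `t` are refutable. -/
def DS (t : Fin r → ℕ × Bool) : Prop :=
  ∀ u : Fin r → Node r N M D, (∀ j, info (u j) = some (j, t j)) → Der conf r (pos u)

theorem DS_end (hD : 0 < D) (hr : 0 < r) {t : Fin r → ℕ × Bool} (ht : ∀ j, (t j).1 = N * M) :
    DS N M D t := by
  intro u hu
  refine step (fun j => info_grp (hu j)) (.F ⟨0, hD⟩) ⟨0, hr⟩ ?_ ?_ ?_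
  · intro j
    refine ⟨(t j).2, ?_⟩
    rw [hu j, ← ht j]
  · intro j h
    have := info_grp (hu j)
    rw [h] at this
    simp [grp] at this
  · intro a h
    exact absurd trivial h

theorem info_update {u : Fin r → Node r N M D} {t : Fin r → ℕ × Bool}
    (hu : ∀ j, info (u j) = some (j, t j)) {i : Fin r} {v : Node r N M D} {e : ℕ × Bool}
    (hv : info v = some (i, e)) :
    ∀ j, info (Function.update u i v j) = some (j, Function.update t i e j) := by
  intro j
  by_cases hj : j = i
  · subst hj; simp [hv]
  · simp [Function.update_of_ne hj, hu j]

theorem DS_Y (hM : 0 < M) {t : Fin r → ℕ × Bool} (i : Fin r) (fl : Bool)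
    (h1 : (t i).2 = !fl) (h2 : tg fl (t i).1 ≤ N * M)
    (h3 : ∀ j < i, if fl then (t j).1 = N * M else (t j).1 = 0 ∧ (t j).2 = false)
    (h : DS N M D (Function.update t i (tg fl (t i).1, fl))) : DS N M D t := by
  obtain ⟨o, a, ha⟩ := dg_surj hM h2
  intro u hu
  refine step (fun j => info_grp (hu j)) (.Y i o fl) i ?_ ?_ ?_
  · intro j
    refine ⟨(t j).1, (t j).2, hu j, h3 j, ?_⟩
    rintro rfl
    exact ⟨h1, a, ha⟩
  · intro j hj
    have e := hu j
    obtain ⟨a', ha'⟩ := info_nw e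
    rw [show u j = (.Y i o fl, .nw a') from Prod.ext hj ha'] at e
    simp only [info, Option.some.injEq, Prod.mk.injEq] at e
    obtain ⟨rfl, e⟩ := e
    rw [← e] at h1
    simp at h1
  · intro a' ha'
    apply h
    apply info_update hu
    have : dg o a' = tg fl (t i).1 := by
      by_contra hne
      exact ha' ⟨(t i).1, by rw [hu i, ← h1], ⟨a, ha⟩, hne⟩
    simp [info, this]

theorem DS_Z {t : Fin r → ℕ × Bool} (l : Fin r)
    (h : DS N M D (Function.update t l (0, false))) : DS N M D t := by
  by_cases hl : t l = (0, false)
  · rwa [← hl, Function.update_eq_self] at h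
  intro u hu
  refine step (fun j => info_grp (hu j)) (.Z (fun _ => 0) l) l ?_ ?_ ?_
  · intro j
    exact Or.inr ⟨_, _, hu j⟩
  · intro j hj
    have e := hu j
    obtain ⟨a', ha'⟩ := info_nw e
    rw [show u j = (.Z (fun _ => 0) l, .nw a') from Prod.ext hj ha'] at e
    simp only [info, Option.some.injEq, Prod.mk.injEq] at e
    obtain ⟨rfl, e⟩ := e
    exact hl e.symm
  · intro a' ha'
    apply h
    apply info_update hu
    simp [info]

theorem DS_reset {t : Fin r → ℕ × Bool} : ∀ n : ℕ, n ≤ r →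
    DS N M D (fun j : Fin r => if (j : ℕ) < n then (0, false) else t j) → DS N M D t := by
  intro n
  induction n with
  | zero => intro _ h; simpa using h
  | succ n ih =>
    intro hn h
    apply ih (by omega)
    apply DS_Z ⟨n, by omega⟩
    convert h using 1
    ext1 j
    by_cases hj : j = ⟨n, by omega⟩
    · subst hj; simp
    · have : (j : ℕ) ≠ n := fun h => hj (Fin.ext h)
      rw [Function.update_of_ne hj]
      by_cases h2 : (j : ℕ) < n
      · simp [h2, Nat.lt_succ_of_lt h2]
      · simp [h2, show ¬ (j : ℕ) < n + 1 by omega]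

def cmb (i : ℕ) (lo : ℕ × Bool) (t : Fin r → ℕ × Bool) : Fin r → ℕ × Bool :=
  fun j => if (j : ℕ) < i then lo else t j

theorem DS_count (hM : 0 < M) : ∀ i : ℕ, i ≤ r → ∀ t : Fin r → ℕ × Bool,
    DS N M D (cmb i (N * M, false) t) → DS N M D (cmb i (0, false) t) := by
  intro i
  induction i with
  | zero =>
    intro _ t h
    have e : ∀ lo, cmb 0 lo t = t := by intro lo; ext1 j; simp [cmb]
    rw [e] at h ⊢
    exact h
  | succ i ih =>
    intro hi t h
    have key : ∀ n d : ℕ, d + n = N * M →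
        DS N M D (cmb i (0, false) (Function.update t ⟨i, hi⟩ (d, false))) := by
      intro n
      induction n with
      | zero =>
        intro d hd
        apply ih (by omega)
        convert h using 1
        ext1 j
        by_cases hj : j = ⟨i, hi⟩
        · subst hj; simp [cmb]; omega
        · have : (j : ℕ) ≠ i := fun h => hj (Fin.ext h)
          simp only [cmb, Function.update_of_ne hj]
          simp [show (j : ℕ) < i + 1 ↔ (j : ℕ) < i by omega]
      | succ n ihn =>
        intro d hd
        have hnext := ihn (d + 1) (by omega)
        apply ih (by omega)
        apply DS_Y hM ⟨i, hi⟩ true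
        · simp [cmb]
        · simp [cmb, tg]; omega
        · intro j hj
          have : (j : ℕ) < i := hj
          simp [cmb, this]
        apply DS_reset i (by omega)
        apply DS_Y hM ⟨i, hi⟩ false
        · simp [cmb]
        · simp [cmb, tg]; omega
        · intro j hj
          have : (j : ℕ) < i := hj
          simp [this]
        convert hnext using 1
        ext1 j
        by_cases hj : j = ⟨i, hi⟩
        · subst hj; simp [cmb, tg]
        · have : (j : ℕ) ≠ i := fun h => hj (Fin.ext h)
          simp only [cmb, Function.update_of_ne hj]
          by_cases h2 : (j : ℕ) < i <;> simp [h2]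
    have := key (N * M) 0 (by omega)
    convert this using 1
    ext1 j
    by_cases hj : j = ⟨i, hi⟩
    · subst hj; simp [cmb]
    · have : (j : ℕ) ≠ i := fun h => hj (Fin.ext h)
      simp only [cmb, Function.update_of_ne hj]
      simp [show (j : ℕ) < i + 1 ↔ (j : ℕ) < i by omega]

theorem DS_zero (hM : 0 < M) (hD : 0 < D) (hr : 0 < r) :
    DS N M D (fun _ : Fin r => (0, false)) := by
  have := DS_count (N := N) (M := M) (D := D) hM r le_rfl (fun _ : Fin r => (0, false))
    (DS_end hD hr (by intro j; simp [cmb]))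
  convert this using 1
  ext1 j
  simp [cmb]

/-- Mixed starting positions. -/
theorem der_start (hM : 0 < M) (hD : 0 < D) (hr : 0 < r) (b : Fin r → Val r M) :
    ∀ n i : ℕ, i + n = r → ∀ a : Fin r → Fin M,
      Der conf r (pos (fun j : Fin r => ((if (j : ℕ) < i then (.Z (fun l => code (b l)) j, .nw (a j))
        else (.W j, b j)) : Node r N M D))) := by
  intro n
  induction n with
  | zero =>
    intro i hi a
    apply DS_zero hM hD hr
    intro j
    simp [show (j : ℕ) < i by omega, info]
  | succ n ih =>
    intro i hi a
    have hir : i < r := by omega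
    refine step ?_ (.Z (fun l => code (b l)) ⟨i, hir⟩) ⟨i, hir⟩ ?_ ?_ ?_
    · intro j
      by_cases h : (j : ℕ) < i <;> simp [h, grp]
    · intro j
      by_cases h : (j : ℕ) < i <;> simp [h, E, info]
    · intro j
      by_cases h : (j : ℕ) < i
      · simp only [h, if_true]
        intro e
        simp only [Var.Z.injEq, true_and] at e
        rw [e] at h
        simp at h
      · simp [h]
    · intro a' _
      convert ih (i + 1) (by omega) (Function.update a ⟨i, hir⟩ a') using 2
      ext1 j
      by_cases hj : j = ⟨i, hir⟩
      · subst hj; simp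
      · have : (j : ℕ) ≠ i := fun h => hj (Fin.ext h)
        simp only [Function.update_of_ne hj]
        simp [show (j : ℕ) < i + 1 ↔ (j : ℕ) < i by omega]

theorem der_W (hM : 0 < M) (hD : 0 < D) (hr : 0 < r) :
    ∀ n i : ℕ, i + n = r → ∀ b : Fin r → Val r M,
      Der conf r ((Finset.univ.filter (fun j : Fin r => (j : ℕ) < i)).image
        (fun j => ((.W j, b j) : Node r N M D))) := by
  intro n
  induction n with
  | zero =>
    intro i hi b
    have := der_start (N := N) (D := D) hM hD hr b r 0 (by omega) (fun _ => ⟨0, hM⟩)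
    convert this using 1
    ext v
    simp only [mem_pos, Finset.mem_image, Finset.mem_filter, Finset.mem_univ, true_and]
    refine exists_congr (fun j => ?_)
    simp [show (j : ℕ) < i by omega]
  | succ n ih =>
    intro i hi b
    have hir : i < r := by omega
    refine der_rule ?_ ?_ (.W ⟨i, hir⟩) (fun c => ⟨_, subset_rfl, ?_⟩)
    · intro x y y' h1 h2
      simp only [Finset.mem_image, Prod.mk.injEq] at h1 h2
      obtain ⟨j, _, rfl, rfl⟩ := h1
      obtain ⟨j', _, h, rfl⟩ := h2
      simp only [Var.W.injEq] at h
      rw [h]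
    · refine Finset.card_image_le.trans ((Finset.card_filter_le _ _).trans (by simp))
    · convert ih (i + 1) (by omega) (Function.update b ⟨i, hir⟩ c) using 1
      ext v
      simp only [Finset.mem_insert, Finset.mem_image, Finset.mem_filter, Finset.mem_univ, true_and]
      constructor
      · rintro (rfl | ⟨j, hj, rfl⟩)
        · exact ⟨⟨i, hir⟩, by simp, by simp⟩
        · refine ⟨j, by omega, ?_⟩
          have : j ≠ ⟨i, hir⟩ := by rintro rfl; simp at hj
          simp [Function.update_of_ne this]
      · rintro ⟨j, hj, rfl⟩
        by_cases hji : j = ⟨i, hir⟩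
        · subst hji; left; simp
        · have : (j : ℕ) ≠ i := fun h => hji (Fin.ext h)
          right
          exact ⟨j, by omega, by simp [Function.update_of_ne hji]⟩

theorem upper (hM : 0 < M) (hD : 0 < D) (hr : 0 < r) :
    Der (conf (r := r) (N := N) (M := M) (D := D)) r ∅ := by
  have := der_W (N := N) (D := D) hM hD hr r 0 (by omega) (fun _ => .nw ⟨0, hM⟩)
  simpa using this

end Concrete

theorem build {r N M D n m : ℕ} (hr : 0 < r) (hN : 2 ≤ N) (hM : 0 < M) (hD : 0 < D)
    (hn : r + (r + 1) ^ r * r + r * ((N + 1) * 2) + D = n) (hm : M + r = m) :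
    ∃ (A : RelStruct (Fin n × Fin n) (Fin n)) (B : RelStruct (Fin n × Fin n) (Fin m)),
      Binary A ∧ Binary B ∧ (∃ d, Deriv A B r (∅ : Finset (Fin n × Fin m)) d) ∧
      ∀ d, Deriv A B r (∅ : Finset (Fin n × Fin m)) d → (N * M + 1) ^ r ≤ d := by
  obtain ⟨ea⟩ : Nonempty (Var r N D ≃ Fin n) := by
    refine ⟨(varEquiv r N D).trans (Fintype.equivFinOfCardEq ?_)⟩
    rw [← hn]
    simp
    ring
  obtain ⟨eb⟩ : Nonempty (Val r M ≃ Fin m) := by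
    refine ⟨(valEquiv r M).trans (Fintype.equivFinOfCardEq ?_)⟩
    rw [← hm]
    simp
  let cf : Fin n × Fin m → Fin n × Fin m → Prop := fun u v =>
    conf (Prod.map ea.symm eb.symm u) (Prod.map ea.symm eb.symm v)
  refine ⟨stA (Fin n), stB cf, ?_, ?_, ?_, ?_⟩
  · rintro R t (rfl : t = _); simp
  · rintro R t ⟨a, b, rfl, _⟩; simp
  · obtain ⟨d, hd⟩ := upper (r := r) (N := N) (M := M) (D := D) hM hD hr
    refine ⟨d, ?_⟩
    have := deriv_transport ea eb conf cf (by rintro ⟨u, u'⟩ ⟨v, v'⟩; simp [cf]) hd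
    simpa using this
  · intro d hd
    have := deriv_transport ea.symm eb.symm cf conf (by intro u v; exact Iff.rfl) hd
    exact lower_empty hN hM (by simpa using this)

end CSPLB

/-- for every `k ≥ 2` there are `ε > 0` and `n₀, m₀ ≥ 1` such that for all
`n ≥ n₀`, `m ≥ m₀` there are binary relational structures `A` (with `n` elements) and `B`
(with `m` elements) over a common finite vocabulary such that a CSP-refutation of width
at most `k-1` exists and `depth^k(A,B) ≥ ε · n^(k-1) · m^(k-1)`. -/
theorem csp_propagation_depth_lower_bound (k : ℕ) (hk : 2 ≤ k) :
    ∃ ε : ℝ, 0 < ε ∧ ∃ n₀ m₀ : ℕ, 0 < n₀ ∧ 0 < m₀ ∧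
      ∀ n m : ℕ, n₀ ≤ n → m₀ ≤ m →
        ∃ (ι : Type) (_ : Fintype ι) (A : RelStruct ι (Fin n)) (B : RelStruct ι (Fin m)),
          CSP.Binary A ∧ CSP.Binary B ∧
          (∃ d, CSP.Deriv A B (k - 1) (∅ : Finset (Fin n × Fin m)) d) ∧
          ε * (n : ℝ) ^ (k - 1) * (m : ℝ) ^ (k - 1) ≤
            ((sInf {d : ℕ | CSP.Deriv A B (k - 1) (∅ : Finset (Fin n × Fin m)) d} : ℕ) : ℝ) := by
  obtain ⟨r, rfl⟩ : ∃ r, k = r + 1 := ⟨k - 1, by omega⟩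
  have hr : 0 < r := by omega
  simp only [Nat.add_sub_cancel]
  obtain ⟨Q, hQ⟩ : ∃ Q, Q = r + (r + 1) ^ r * r + 2 * r + 1 := ⟨_, rfl⟩
  have hrR : (0 : ℝ) < r := by exact_mod_cast hr
  refine ⟨(1 / (16 * (r : ℝ))) ^ r, by positivity, 2 * Q + 4 * r + 1, 2 * r + 1, by omega,
    by omega, ?_⟩
  intro n m hn hm
  obtain ⟨N, hNdef⟩ : ∃ N, N = (n - Q) / (2 * r) := ⟨_, rfl⟩
  have h1 : 2 * r * N ≤ n - Q := by rw [hNdef]; exact Nat.mul_div_le _ _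
  have h2 : n - Q < 2 * r * N + 2 * r := by
    rw [hNdef]; exact Nat.lt_mul_div_succ _ (by omega)
  have hN : 2 ≤ N := by
    rw [hNdef, Nat.le_div_iff_mul_le (by omega)]
    omega
  have hrN : r * 2 ≤ r * N := Nat.mul_le_mul_left r hN
  have h3 : 2 * r * N = 2 * (r * N) := by ring
  have h4 : r * ((N + 1) * 2) = 2 * (r * N) + 2 * r := by ring
  obtain ⟨A, B, hA, hB, hex, hlow⟩ := CSPLB.build (r := r) (N := N) (M := m - r)
    (D := n - (r + (r + 1) ^ r * r + r * ((N + 1) * 2))) (n := n) (m := m) hr hN (by omega)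
    (by omega) (by omega) (by omega)
  refine ⟨Fin n × Fin n, inferInstance, A, B, hA, hB, hex, ?_⟩
  have h5 := hlow _ (Nat.sInf_mem hex)
  refine le_trans ?_ (Nat.cast_le.2 h5)
  have hn8 : n ≤ 8 * (r * N) := by omega
  have hm2 : m ≤ 2 * (m - r) := by omega
  have h6 : n * m ≤ 16 * r * (N * (m - r)) := by
    calc n * m ≤ (8 * (r * N)) * (2 * (m - r)) := Nat.mul_le_mul hn8 hm2
      _ = _ := by ring
  have h7 : (n : ℝ) * m ≤ 16 * r * ((N * (m - r) : ℕ) : ℝ) := by exact_mod_cast h6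
  push_cast [← mul_pow]
  apply pow_le_pow_left₀ (by positivity)
  rw [mul_assoc, one_div, inv_mul_le_iff₀ (by positivity)]
  push_cast at h7
  nlinarith
end

section
/- For every integer k ≥ 2 there exist a constant ε > 0 and positive integers n_0, m_0 such that for all n ≥ n_0 and m ≥ m_0 there exist binary relational structures A_n and B_m over a common vocabulary with |V(A_n)| = n and |V(B_m)| = m such that Spoiler has a winning strategy in the existential k-pebble game on A_n and B_m, but Spoiler has no strategy that wins within fewer than ε · n^(k−1) · m^(k−1) rounds. -/
namespace CSP

variable {ι α β : Type}

/-- `SpoilerWin A B k p d`: Spoiler has a strategy to win the existential `k`-pebble game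
on `A` and `B` within `d` rounds (pebble placements), starting from position `p`.
Either the current position is already not a partial homomorphism, or Spoiler picks up
some pebbles (keeping `p' ⊆ p` with `|p'| < k`), places a free pebble on some `x ∈ V(A)`,
and wins within the remaining rounds against every answer `b ∈ V(B)` of Duplicator. -/
inductive SpoilerWin [DecidableEq α] [DecidableEq β]
    (A : RelStruct ι α) (B : RelStruct ι β) (k : ℕ) :
    Finset (α × β) → ℕ → Prop
  | win {p : Finset (α × β)} {d : ℕ} :
      ¬ PartialHom A B p → SpoilerWin A B k p d
  | move {p : Finset (α × β)} {d : ℕ} (p' : Finset (α × β)) (x : α) :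
      p' ⊆ p → p'.card < k →
      (∀ b : β, SpoilerWin A B k (insert (x, b) p') d) →
      SpoilerWin A B k p (d + 1)

end CSP

namespace PG

/-- Variables of the constraint network. -/
inductive Var (L q : ℕ) where
  | S (i : Fin L)
  | T (u : Fin L) (σ : Fin L → Bool)
  | X (u : Fin L) (l : Fin (2 * q))
  deriving DecidableEq

/-- Values of the constraint network. -/
inductive Val (L m : ℕ) where
  | bit (b : Bool)
  | esc (j : Fin L)
  | num (a : Fin m)
  deriving DecidableEq

open Var Val

variable {L q m : ℕ}

/-- Unary constraints. -/
inductive Valid : Var L q → Val L m → Prop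
  | S (i : Fin L) (b : Bool) : Valid (S i) (bit b)
  | Tb (u : Fin L) (σ : Fin L → Bool) : Valid (T u σ) (bit true)
  | Te (u : Fin L) (σ : Fin L → Bool) (j : Fin L) : Valid (T u σ) (esc j)
  | Xe (u : Fin L) (l : Fin (2 * q)) (j : Fin L) : Valid (X u l) (esc j)
  | Xn (u : Fin L) (l : Fin (2 * q)) (a : Fin m) : Valid (X u l) (num a)

/-- The count of a digit whose marker is variable `l` with value `a`. -/
def cnt (q l a : ℕ) : ℕ := a * (2 * q) + l

/-- The forbidden pairs. -/
inductive Bad : Var L q → Val L m → Var L q → Val L m → Prop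
  | inv {x : Var L q} {b : Val L m} {y b'} : ¬ Valid x b → Bad x b y b'
  | fn {x : Var L q} {b b' : Val L m} {y} : x = y → b ≠ b' → Bad x b y b'
  | st {i β u σ j} : i = j → β = σ i → Bad (S i) (bit β) (T u σ) (esc j)
  | tt {i σ u σ' j} : i = j → σ = σ' → Bad (T i σ) (bit true) (T u σ') (esc j)
  | mkT {j σ u l j'} : j = j' → j ≠ u → j.val + 1 ≠ u.val →
      Bad (T j σ) (bit true) (X u l) (esc j')
  | mkX {j l a u l' j'} : j = j' → j ≠ u →
      (j.val + 1 = u.val → q * m ∣ cnt q l.val a.val ∧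
        (cnt q l.val a.val / (q * m)) % 2 = l'.val % 2) →
      Bad (X j l) (num a) (X u l') (esc j')
  | pTe {u σ u' l j} : u = u' → u = j → l.val = 0 → Bad (T u σ) (bit true) (X u' l) (esc j)
  | pTn {u σ u' l a} : u = u' → l.val = 0 → a.val ≠ 0 → Bad (T u σ) (bit true) (X u' l) (num a)
  | pXe {u l a u' l' j} : u = u' → u = j → l'.val = (cnt q l.val a.val + 1) % (2 * q) →
      Bad (X u l) (num a) (X u' l') (esc j)
  | pXn {u l a u' l' a'} : u = u' → l'.val = (cnt q l.val a.val + 1) % (2 * q) →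
      (a'.val ≠ (cnt q l.val a.val + 1) / (2 * q) % m ∨
        (u.val + 1 = L ∧ 2 * q * m ≤ cnt q l.val a.val + 1)) →
      Bad (X u l) (num a) (X u' l') (num a')

abbrev Pos (L q m : ℕ) := Finset (Var L q × Val L m)

def PH (p : Pos L q m) : Prop := ∀ e ∈ p, ∀ e' ∈ p, ¬ Bad e.1 e.2 e'.1 e'.2

theorem PH.mono {p p' : Pos L q m} (h : PH p) (hs : p' ⊆ p) : PH p' :=
  fun e he e' he' => h e (hs he) e' (hs he')

theorem succ_ne {q l : ℕ} (a : ℕ) (hq : 2 ≤ q) (hl : l < 2 * q) :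
    l ≠ (cnt q l a + 1) % (2 * q) := by
  have e : (cnt q l a + 1) % (2 * q) = (l + 1) % (2 * q) := by
    unfold cnt; rw [show a * (2 * q) + l + 1 = l + 1 + (2 * q) * a by ring, Nat.add_mul_mod_self_left]
  rw [e]
  rcases Nat.lt_or_ge (l + 1) (2 * q) with h | h
  · rw [Nat.mod_eq_of_lt h]; omega
  · obtain h : l + 1 = 2 * q := by omega
    rw [h, Nat.mod_self]; omega

theorem not_bad_self (hq : 2 ≤ q) {x : Var L q} {b : Val L m} (hv : Valid x b) :
    ¬ Bad x b x b := by
  intro hb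
  cases hb with
  | inv h => exact h hv
  | fn _ h => exact h rfl
  | pXn _ h _ => exact succ_ne _ hq (Fin.isLt _) h

theorem PH.insert (hq : 2 ≤ q) {p : Pos L q m} (h : PH p) {x b} (hx : ∀ b', (x, b') ∉ p) (hv : Valid x b)
    (h1 : ∀ y b', (y, b') ∈ p → y ≠ x → ¬ Bad x b y b')
    (h2 : ∀ y b', (y, b') ∈ p → y ≠ x → Valid y b' → ¬ Bad y b' x b) :
    PH (insert (x, b) p) := by
  have key : ∀ y b', (y, b') ∈ p → y ≠ x := by
    rintro y b' hy rfl; exact hx _ hy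
  rintro ⟨y, c⟩ he ⟨y', c'⟩ he'
  rw [Finset.mem_insert] at he he'
  rcases he with he | he <;> rcases he' with he' | he'
  · cases he; cases he'
    exact not_bad_self hq hv
  · cases he
    exact h1 _ _ he' (key _ _ he')
  · cases he'
    refine h2 _ _ he (key _ _ he) ?_
    by_contra hv'
    exact h _ he _ he (Bad.inv hv')
  · exact h _ he _ he'

/-- Spoiler wins the game on the network (with `L + 1` pebbles). -/
inductive Win : Pos L q m → Prop
  | lose {p} : ¬ PH p → Win p
  | move {p} (p' : Pos L q m) (x : Var L q) : p' ⊆ p → p'.card ≤ L →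
      (∀ b, Win (insert (x, b) p')) → Win p

theorem Win.mono {p p' : Pos L q m} (h : Win p) (hs : p ⊆ p') : Win p' := by
  cases h with
  | lose h => exact .lose fun h' => h (h'.mono hs)
  | move r x h1 h2 h3 => exact .move r x (h1.trans hs) h2 h3

/-! ### Spoiler's strategy -/

/-- The marker of digit `u` at count `C`. -/
def mk (hq : 0 < 2 * q) (hm : 0 < m) (σ : Fin L → Bool) (u : Fin L) : ℕ → Var L q × Val L m
  | 0 => (T u σ, bit true)
  | c + 1 => (X u ⟨c % (2 * q), Nat.mod_lt _ hq⟩, num ⟨c / (2 * q) % m, Nat.mod_lt _ hm⟩)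

def stt (hq : 0 < 2 * q) (hm : 0 < m) (σ : Fin L → Bool) (C : Fin L → ℕ) : Pos L q m :=
  Finset.univ.image fun u => mk hq hm σ u (C u)

theorem stt_card (hq : 0 < 2 * q) (hm : 0 < m) (σ : Fin L → Bool) (C : Fin L → ℕ) :
    (stt hq hm σ C).card ≤ L :=
  Finset.card_image_le.trans (by simp)

theorem cnt_mod (q m c : ℕ) : cnt q (c % (2 * q)) (c / (2 * q) % m) = c % (2 * q * m) := by
  unfold cnt
  rw [Nat.mod_mul (a := 2 * q) (b := m)]; ring

/-- Digit `u` can be incremented. -/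
def Ready (q m : ℕ) (C : Fin L → ℕ) (u : Fin L) : Prop :=
  ∀ j : Fin L, j.val + 1 = u.val → ∃ c, C j = c + 1 ∧ q * m ∣ c ∧ (c / (q * m)) % 2 = C u % 2

theorem dvd_par {q m c : ℕ} :
    (q * m ∣ c % (2 * q * m) ↔ q * m ∣ c) ∧
    ((c % (2 * q * m)) / (q * m)) % 2 = (c / (q * m)) % 2 := by
  have e : 2 * q * m = (q * m) * 2 := by ring
  rw [e]
  constructor
  · exact Nat.dvd_mod_iff (Dvd.intro _ rfl)
  · rw [Nat.mod_mul_right_div_self, Nat.mod_mod]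

theorem move (hq : 2 ≤ q) (hq' : 0 < 2 * q) (hm : 0 < m) (σ : Fin L → Bool) (C : Fin L → ℕ)
    (u : Fin L) (hr : Ready q m C u)
    (hw : (u.val + 1 = L → C u ≠ 2 * q * m) →
      Win (stt hq' hm σ (Function.update C u (C u + 1)))) :
    Win (stt hq' hm σ C) := by
  refine .move _ (X u ⟨C u % (2 * q), Nat.mod_lt _ hq'⟩) subset_rfl (stt_card ..) ?_
  intro b
  by_cases hph : PH (insert (X u ⟨C u % (2 * q), Nat.mod_lt _ hq'⟩, b) (stt hq' hm σ C))
  swap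
  · exact .lose hph
  have hmem : ∀ j, mk hq' hm σ j (C j) ∈
      insert (X u ⟨C u % (2 * q), Nat.mod_lt _ hq'⟩, b) (stt hq' hm σ C) := fun j =>
    Finset.mem_insert_of_mem (Finset.mem_image_of_mem _ (Finset.mem_univ j))
  have hself := Finset.mem_insert_self (X u ⟨C u % (2 * q), Nat.mod_lt _ hq'⟩, b) (stt hq' hm σ C)
  have hv : Valid (X u ⟨C u % (2 * q), Nat.mod_lt _ hq'⟩) b := by
    by_contra h; exact hph _ hself _ hself (.inv h)
  have hbad := fun j => hph _ (hmem j) _ hself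
  have succmod : ∀ c, (cnt q (c % (2 * q)) (c / (2 * q) % m) + 1) % (2 * q) = (c + 1) % (2 * q) := by
    intro c; rw [cnt_mod, Nat.add_mod, Nat.mod_mul_right_mod, ← Nat.add_mod]
  have succdiv : ∀ c, (cnt q (c % (2 * q)) (c / (2 * q) % m) + 1) / (2 * q) % m
      = (c + 1) / (2 * q) % m := by
    intro c
    rw [cnt_mod, ← Nat.mod_mul_right_div_self, ← Nat.mod_mul_right_div_self, Nat.mod_add_mod]
  cases hv with
  | Xe _ _ j =>
    exfalso
    apply hbad j
    by_cases hju : j = u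
    · subst hju
      cases hC : C j with
      | zero => simp only [mk]; exact .pTe rfl rfl (by simp)
      | succ c => simp only [mk]; exact .pXe rfl rfl (by simp only [succmod])
    · cases hC : C j with
      | zero =>
        simp only [mk]
        refine .mkT rfl hju ?_
        intro h
        obtain ⟨c, hc, -⟩ := hr j h
        omega
      | succ c =>
        simp only [mk]
        refine .mkX rfl hju ?_
        intro h
        obtain ⟨c', hc, h1, h2⟩ := hr j h
        obtain rfl : c = c' := by omega
        simp only [cnt_mod]
        have := dvd_par (q := q) (m := m) (c := c)
        rw [this.1, this.2, Nat.mod_mul_right_mod]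
        exact ⟨h1, h2⟩
  | Xn _ _ a =>
    have ha : a.val = C u / (2 * q) % m ∧ (u.val + 1 = L → C u ≠ 2 * q * m) := by
      have := hbad u
      cases hC : C u with
      | zero =>
        simp only [hC, mk] at this
        constructor
        · by_contra h
          apply this
          exact .pTn rfl (by simp) (by simpa using h)
        · intro _ h
          have : 0 < 2 * q * m := by positivity
          omega
      | succ c =>
        simp only [hC, mk] at this
        constructor
        · by_contra h
          apply this
          exact .pXn rfl (by simp only [succmod]) (.inl (by simp only [succdiv]; exact h))
        · intro h1 h2
          apply this
          refine .pXn rfl (by simp only [succmod]) (.inr ⟨h1, ?_⟩)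
          simp only [cnt_mod]
          rw [Nat.mod_eq_of_lt (by omega)]; omega
    refine (hw ha.2).mono ?_
    intro e he
    simp only [stt, Finset.mem_image, Finset.mem_univ, true_and] at he
    obtain ⟨j, rfl⟩ := he
    by_cases hju : j = u
    · subst hju
      simp only [Function.update_self, mk]
      rw [Finset.mem_insert]; left
      congr 2
      exact Fin.ext ha.1.symm
    · rw [Function.update_of_ne hju]
      exact hmem j

theorem reach (hq : 2 ≤ q) (hq' : 0 < 2 * q) (hm : 0 < m) (σ : Fin L → Bool) (r : ℕ) :
    ∀ (u : Fin L), u.val = r → ∀ (C : Fin L → ℕ),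
    (∀ C' : Fin L → ℕ, (∀ j, u ≤ j → C' j = C j) → Ready q m C' u →
      Win (stt hq' hm σ C')) → Win (stt hq' hm σ C) := by
  induction r with
  | zero =>
    intro u hu C h
    refine h C (fun _ _ => rfl) ?_
    intro j hj; omega
  | succ r ih =>
    intro u hu C h
    have hr : r < L := by omega
    have hpos : 0 < q * m := by positivity
    -- a target count for digit `r`
    obtain ⟨t, ht, htp⟩ : ∃ t, C ⟨r, hr⟩ ≤ q * m * t + 1 ∧ t % 2 = C u % 2 := by
      refine ⟨2 * C ⟨r, hr⟩ + C u % 2, ?_, by omega⟩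
      nlinarith [Nat.zero_le (q * m * (C u % 2))]
    obtain ⟨δ, hδ⟩ := Nat.exists_eq_add_of_le ht
    induction δ generalizing C with
    | zero =>
      refine h C (fun _ _ => rfl) ?_
      intro j hj
      obtain rfl : j = ⟨r, hr⟩ := Fin.ext (by simp; omega)
      refine ⟨q * m * t, by omega, Dvd.intro _ rfl, ?_⟩
      rw [Nat.mul_div_cancel_left _ hpos]; exact htp
    | succ δ ihδ =>
      refine ih ⟨r, hr⟩ rfl C ?_
      intro C' hC' hR
      refine move hq hq' hm σ C' ⟨r, hr⟩ hR ?_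
      intro _
      have h0 : C' ⟨r, hr⟩ = C ⟨r, hr⟩ := hC' _ le_rfl
      have hup : ∀ j, u ≤ j →
          Function.update C' ⟨r, hr⟩ (C' ⟨r, hr⟩ + 1) j = C j := by
        intro j hj
        have hlt : r < j.val := by
          have : u.val ≤ j.val := hj
          omega
        rw [Function.update_of_ne, hC']
        · show r ≤ j.val
          omega
        · rintro rfl; simp at hlt
      apply ihδ
      · intro C'' h1 h2
        exact h C'' (fun j hj => (h1 j hj).trans (hup j hj)) h2
      · simp only [Function.update_self]; omega
      · rw [hup u le_rfl]; exact htp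
      · simp only [Function.update_self]; omega

theorem win_stt (hq : 2 ≤ q) (hq' : 0 < 2 * q) (hm : 0 < m) (hL : 0 < L) (σ : Fin L → Bool)
    (δ : ℕ) : ∀ C : Fin L → ℕ, C ⟨L - 1, by omega⟩ + δ = 2 * q * m → Win (stt hq' hm σ C) := by
  induction δ with
  | zero =>
    intro C hC
    refine reach hq hq' hm σ _ ⟨L - 1, by omega⟩ rfl C ?_
    intro C' h1 h2
    refine move hq hq' hm σ C' _ h2 ?_
    intro h
    exact absurd (by rw [h1 _ le_rfl]; omega) (h (by simp; omega))
  | succ δ ih =>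
    intro C hC
    refine reach hq hq' hm σ _ ⟨L - 1, by omega⟩ rfl C ?_
    intro C' h1 h2
    refine move hq hq' hm σ C' _ h2 ?_
    intro _
    apply ih
    rw [Function.update_self, h1 _ le_rfl]; omega

/-- Mixed position during initialization. -/
def mix (σ : Fin L → Bool) (r : ℕ) : Pos L q m :=
  Finset.univ.image fun i : Fin L => if i.val < r then (T i σ, bit true) else (S i, bit (σ i))

theorem mix_card (σ : Fin L → Bool) (r : ℕ) : (mix σ r : Pos L q m).card ≤ L :=
  Finset.card_image_le.trans (by simp)

theorem win_mix (hq : 2 ≤ q) (hq' : 0 < 2 * q) (hm : 0 < m) (hL : 0 < L) (σ : Fin L → Bool)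
    (δ : ℕ) : ∀ r, r + δ = L → Win (mix σ r : Pos L q m) := by
  induction δ with
  | zero =>
    intro r hr
    refine (win_stt hq hq' hm hL σ (2 * q * m) (fun _ => 0) (by simp)).mono ?_
    intro e he
    simp only [stt, mix, Finset.mem_image, Finset.mem_univ, true_and] at he ⊢
    obtain ⟨u, rfl⟩ := he
    exact ⟨u, by rw [if_pos (by omega)]; rfl⟩
  | succ δ ih =>
    intro r hr
    have hrL : r < L := by omega
    refine .move _ (T ⟨r, hrL⟩ σ) subset_rfl (mix_card ..) ?_
    intro b
    by_cases hph : PH (insert (T ⟨r, hrL⟩ σ, b) (mix σ r : Pos L q m))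
    swap
    · exact .lose hph
    have hself := Finset.mem_insert_self (T ⟨r, hrL⟩ σ, b) (mix σ r : Pos L q m)
    have hmem : ∀ i : Fin L, (if i.val < r then (T i σ, bit true) else (S i, bit (σ i))) ∈
        insert (T ⟨r, hrL⟩ σ, b) (mix σ r : Pos L q m) := fun j =>
      Finset.mem_insert_of_mem (Finset.mem_image_of_mem _ (Finset.mem_univ j))
    have hv : Valid (T ⟨r, hrL⟩ σ : Var L q) b := by
      by_contra h; exact hph _ hself _ hself (.inv h)
    cases hv with
    | Te _ _ j =>
      exfalso
      have := hmem j
      split_ifs at this with h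
      · exact hph _ this _ hself (.tt rfl rfl)
      · exact hph _ this _ hself (.st rfl rfl)
    | Tb =>
      refine (ih (r + 1) (by omega)).mono ?_
      intro e he
      simp only [mix, Finset.mem_image, Finset.mem_univ, true_and] at he
      obtain ⟨i, rfl⟩ := he
      rcases lt_trichotomy i.val r with h | h | h
      · have := hmem i
        rw [if_pos h] at this
        rwa [if_pos (by omega)]
      · obtain rfl : i = ⟨r, hrL⟩ := Fin.ext h
        rw [if_pos (by simp)]
        exact hself
      · have := hmem i
        rw [if_neg (by omega)] at this
        rwa [if_neg (by omega)]

theorem win_start (hq : 2 ≤ q) (hm : 0 < m) (hL : 0 < L) : Win (∅ : Pos L q m) := by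
  have main : ∀ δ r, r + δ = L → ∀ σ : Fin L → Bool,
      Win ((Finset.univ.filter fun i : Fin L => i.val < r).image
        fun i => (S i, bit (σ i)) : Pos L q m) := by
    intro δ
    induction δ with
    | zero =>
      intro r hr σ
      refine (win_mix hq (by omega) hm hL σ L 0 (by omega)).mono ?_
      intro e he
      simp only [mix, Finset.mem_image, Finset.mem_univ, true_and, Finset.mem_filter] at he ⊢
      obtain ⟨u, rfl⟩ := he
      exact ⟨u, by omega, by simp⟩
    | succ δ ih =>
      intro r hr σ
      have hrL : r < L := by omega
      refine .move _ (S ⟨r, hrL⟩) subset_rfl ?_ ?_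
      · exact Finset.card_image_le.trans ((Finset.card_filter_le _ _).trans (by simp))
      intro b
      by_cases hph : PH (insert (S ⟨r, hrL⟩, b)
        ((Finset.univ.filter fun i : Fin L => i.val < r).image
        fun i => (S i, bit (σ i)) : Pos L q m))
      swap
      · exact .lose hph
      have hself := Finset.mem_insert_self (S ⟨r, hrL⟩, b)
        ((Finset.univ.filter fun i : Fin L => i.val < r).image
        fun i => (S i, bit (σ i)) : Pos L q m)
      have hv : Valid (S ⟨r, hrL⟩ : Var L q) b := by
        by_contra h; exact hph _ hself _ hself (.inv h)
      cases hv with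
      | S _ b =>
        refine (ih (r + 1) (by omega) (Function.update σ ⟨r, hrL⟩ b)).mono ?_
        intro e he
        simp only [Finset.mem_image, Finset.mem_univ, true_and, Finset.mem_filter] at he
        obtain ⟨i, hi, rfl⟩ := he
        by_cases h : i = ⟨r, hrL⟩
        · subst h
          rw [Function.update_self]; exact hself
        · rw [Function.update_of_ne h]
          refine Finset.mem_insert_of_mem (Finset.mem_image_of_mem _ ?_)
          have : i.val ≠ r := fun h' => h (Fin.ext h')
          simp; omega
  have := main L 0 (by omega) (fun _ => true)
  simpa using this

/-! ### Duplicator's strategy -/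

def Marker (u : Fin L) (e : Var L q × Val L m) : Prop :=
  (∃ σ, e = (T u σ, bit true)) ∨ ∃ l a, e = (X u l, num a)

def Rep (u : Fin L) (C : ℕ) (e : Var L q × Val L m) : Prop :=
  (C = 0 ∧ ∃ σ, e = (T u σ, bit true)) ∨
    ∃ c l a, C = c + 1 ∧ e = (X u l, num a) ∧ l.val = c % (2 * q) ∧ a.val = c / (2 * q) % m

def Inv (q m : ℕ) (C : Fin L → ℕ) : Prop :=
  ∀ u v : Fin L, u.val + 1 = v.val → q * m * C v + 1 ≤ C u + q * m

def Tmax (L q m : ℕ) : ℕ := (q * m) ^ (L - 1) * (2 * q * m)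

structure G (t : ℕ) (p : Pos L q m) : Prop where
  ph : PH p
  tau : ∃ τ : Fin L → Bool, (∀ u σ i, (T u σ, esc i) ∈ p → τ i = !σ i) ∧
    (∀ i β, (S i, bit β) ∈ p → τ i = β)
  cnt : ∀ M : Fin L → Var L q × Val L m, (∀ u, M u ∈ p ∧ Marker u (M u)) →
    ∃ C : Fin L → ℕ, (∀ u, Rep u (C u) (M u)) ∧ Inv q m C ∧ ∀ u, u.val = 0 → C u + t ≤ Tmax L q m
  ht : t ≤ Tmax L q m

theorem G.mono {t t' : ℕ} {p p' : Pos L q m} (h : G t p) (hs : p' ⊆ p) (ht : t' ≤ t) : G t' p' where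
  ph := h.ph.mono hs
  tau := by
    obtain ⟨τ, h1, h2⟩ := h.tau
    exact ⟨τ, fun u σ i hh => h1 u σ i (hs hh), fun i β hh => h2 i β (hs hh)⟩
  cnt := by
    intro M hM
    obtain ⟨C, h1, h2, h3⟩ := h.cnt M (fun u => ⟨hs (hM u).1, (hM u).2⟩)
    exact ⟨C, h1, h2, fun u hu => by have := h3 u hu; omega⟩
  ht := ht.trans h.ht

theorem inv_chain {C : Fin L → ℕ} (h : Inv q m C) (h0 : 0 < L) (r : ℕ) (hr : r < L) :
    (q * m) ^ r * C ⟨r, hr⟩ + 1 ≤ C ⟨0, h0⟩ + (q * m) ^ r := by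
  induction r with
  | zero => simp
  | succ r ih =>
    have h1 := ih (by omega)
    have h2 := Nat.mul_le_mul_left ((q * m) ^ r) (h ⟨r, by omega⟩ ⟨r + 1, hr⟩ rfl)
    rw [pow_succ]
    nlinarith

/-- Adding a pebble that is not a marker. -/
theorem G.insert_nonmarker {t : ℕ} {p : Pos L q m} (h : G (t + 1) p) {x b}
    (hph : PH (insert (x, b) p)) (hm : ∀ u, ¬ Marker u (x, b))
    (htau : ∃ τ : Fin L → Bool, (∀ u σ i, (T u σ, esc i) ∈ insert (x, b) p → τ i = !σ i) ∧
    (∀ i β, (S i, bit β) ∈ insert (x, b) p → τ i = β)) : G t (insert (x, b) p) where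
  ph := hph
  tau := htau
  cnt := by
    intro M hM
    refine (h.mono subset_rfl (Nat.le_succ t)).cnt M fun u => ⟨?_, (hM u).2⟩
    rcases Finset.mem_insert.1 (hM u).1 with h' | h'
    · exact absurd (h' ▸ (hM u).2) (hm u)
    · exact h'
  ht := by have := h.ht; omega

/-- Adding an `X` pebble keeps the colouring condition. -/
theorem G.tau_X {t : ℕ} {p : Pos L q m} (h : G t p) {u l b} :
    ∃ τ : Fin L → Bool, (∀ u' σ i, (T u' σ, esc i) ∈ insert (X u l, b) p → τ i = !σ i) ∧
    (∀ i β, (S i, bit β) ∈ insert (X u l, b) p → τ i = β) := by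
  obtain ⟨τ, h1, h2⟩ := h.tau
  refine ⟨τ, fun u σ i hh => h1 u σ i ?_, fun i β hh => h2 i β ?_⟩ <;> simpa using hh

/-- The tag of a pebble. -/
def tag : Var L q × Val L m → Option (Fin L)
  | (S i, _) => some i
  | (T _ _, esc i) => some i
  | (T u _, _) => some u
  | (X _ _, _) => none

theorem step_S (hq : 2 ≤ q) {t : ℕ} {p : Pos L q m} (h : G (t + 1) p) (i : Fin L)
    (hx : ∀ b', (S i, b') ∉ p) : ∃ b, G t (insert (S i, b) p) := by
  obtain ⟨τ, h1, h2⟩ := h.tau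
  refine ⟨bit (τ i), h.insert_nonmarker (PH.insert hq h.ph hx (.S _ _) ?_ ?_) ?_ ⟨τ, ?_, ?_⟩⟩
  · intro y b' hy hne hb
    cases hb with
    | inv h => exact h (.S _ _)
    | fn h _ => exact hne h.symm
    | st hij hβ =>
      subst hij
      have := h1 _ _ _ hy
      simp_all
  · intro y b' hy hne hv hb
    cases hb with
    | inv h => exact h hv
    | fn h _ => exact hne h
  · rintro u (⟨σ, h⟩ | ⟨l, a, h⟩) <;> cases h
  · intro u σ j hj
    exact h1 u σ j (by simpa using hj)
  · intro j β hj
    rcases Finset.mem_insert.1 hj with h | h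
    · cases h; rfl
    · exact h2 j β h

theorem step_T (hq : 2 ≤ q) (hm : 0 < m) {t : ℕ} {p : Pos L q m} (h : G (t + 1) p) (hp : p.card ≤ L)
    (j : Fin L) (σ : Fin L → Bool)
    (hx : ∀ b', (T j σ, b') ∉ p) : ∃ b, G t (insert (T j σ, b) p) := by
  obtain ⟨τ, h1, h2⟩ := h.tau
  by_cases hc : ∃ i, (T i σ, bit true) ∉ p ∧ (τ i = !σ i ∨
      ((∀ u σ', (T u σ', esc i) ∉ p) ∧ ∀ β, (S i, bit β) ∉ p))
  · obtain ⟨i, hi, hi'⟩ := hc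
    have htau : (∀ u σ' i', (T u σ', esc i') ∈ insert (T j σ, esc i) p →
        Function.update τ i (!σ i) i' = !σ' i') ∧
        (∀ i' β, (S i', bit β) ∈ insert (T j σ, esc i) p →
          Function.update τ i (!σ i) i' = β) := by
      constructor
      · intro u σ' i' hh
        rcases Finset.mem_insert.1 hh with hh2 | hh2
        · cases hh2; simp
        · by_cases hii : i' = i
          · subst hii
            rcases hi' with h' | h'
            · rw [Function.update_self, ← h']; exact h1 _ _ _ hh2
            · exact absurd hh2 (h'.1 _ _)
          · rw [Function.update_of_ne hii]; exact h1 _ _ _ hh2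
      · intro i' β hh
        rcases Finset.mem_insert.1 hh with hh2 | hh2
        · cases hh2
        · by_cases hii : i' = i
          · subst hii
            rcases hi' with h' | h'
            · rw [Function.update_self, ← h']; exact h2 _ _ hh2
            · exact absurd hh2 (h'.2 _)
          · rw [Function.update_of_ne hii]; exact h2 _ _ hh2
    refine ⟨esc i, h.insert_nonmarker (PH.insert hq h.ph hx (.Te _ _ _) ?_ ?_) ?_
      ⟨Function.update τ i (!σ i), htau⟩⟩
    · intro y b' hy hne hb
      cases hb with
      | inv h => exact h (.Te _ _ _)
      | fn h _ => exact hne h.symm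
    · intro y b' hy hne hv hb
      cases hb with
      | inv h => exact h hv
      | fn h _ => exact hne h
      | st hij hβ =>
        subst hij
        have := htau.2 _ _ (Finset.mem_insert_of_mem hy)
        simp_all
      | tt hij hs =>
        subst hij hs
        exact hi hy
    · rintro u (⟨σ, h⟩ | ⟨l, a, h⟩) <;> cases h
  · push Not at hc
    -- no `X` pebble on the board
    have htagall : ∀ i, some i ∈ p.image tag := by
      intro i
      rw [Finset.mem_image]
      by_cases hi : (T i σ, bit true) ∈ p
      · exact ⟨_, hi, rfl⟩
      · obtain ⟨-, h3⟩ := hc i hi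
        by_contra hcon
        push Not at hcon
        obtain ⟨β, hβ⟩ := h3 (fun u σ' hh => hcon _ hh rfl)
        exact hcon _ hβ rfl
    have hnoX : ∀ u l b, (X u l, b) ∉ p := by
      intro u l b hb
      have hall : p.image tag = Finset.univ := by
        ext o
        simp only [Finset.mem_univ, iff_true]
        cases o with
        | none => exact Finset.mem_image.2 ⟨_, hb, rfl⟩
        | some i => exact htagall i
      have : (p.image tag).card ≤ p.card := Finset.card_image_le
      rw [hall] at this
      simp at this
      omega
    refine ⟨bit true, PH.insert hq h.ph hx (.Tb _ _) ?_ ?_, ⟨τ, ?_, ?_⟩, ?_, ?_⟩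
    · intro y b' hy hne hb
      cases hb with
      | inv h => exact h (.Tb _ _)
      | fn h _ => exact hne h.symm
      | tt hij hs =>
        subst hij hs
        exact (hc _ (hx _)).1 (h1 _ _ _ hy)
      | mkT => exact hnoX _ _ _ hy
      | pTe => exact hnoX _ _ _ hy
      | pTn => exact hnoX _ _ _ hy
    · intro y b' hy hne hv hb
      cases hb with
      | inv h => exact h hv
      | fn h _ => exact hne h
    · intro u σ j hj
      exact h1 u σ j (by simpa using hj)
    · intro i β hj
      exact h2 i β (by simpa using hj)
    · intro M hM
      refine ⟨fun _ => 0, ?_, ?_, ?_⟩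
      · intro u
        refine .inl ⟨rfl, ?_⟩
        rcases (hM u).2 with h' | ⟨l, a, h'⟩
        · exact h'
        · have := (hM u).1
          rw [h'] at this
          exact absurd (by simpa using this) (hnoX u l (num a))
      · intro u v _
        have : 0 < q * m := by positivity
        simp; omega
      · intro u _
        have := h.ht
        simp; omega
    · have := h.ht; omega

theorem Rep.marker {u : Fin L} {C : ℕ} {e : Var L q × Val L m} (h : Rep u C e) : Marker u e := by
  rcases h with ⟨_, h⟩ | ⟨c, l, a, _, h, _⟩
  · exact .inl h
  · exact .inr ⟨l, a, h⟩

theorem Marker.unique {u v : Fin L} {e : Var L q × Val L m} (h : Marker u e) (h' : Marker v e) :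
    u = v := by
  rcases h with ⟨_, rfl⟩ | ⟨l, a, rfl⟩ <;> rcases h' with ⟨_, h⟩ | ⟨_, _, h⟩ <;> cases h <;> rfl

theorem step_X (hq : 2 ≤ q) (hm : 0 < m) {t : ℕ} {p : Pos L q m} (h : G (t + 1) p) (hp : p.card ≤ L)
    (u : Fin L) (l : Fin (2 * q))
    (hx : ∀ b', (X u l, b') ∉ p) : ∃ b, G t (insert (X u l, b) p) := by
  -- a generic escape lemma
  have escape : ∀ j, (∀ y b', (y, b') ∈ p → Valid y b' → Marker j (y, b') →
      ¬ Bad y b' (X u l) (esc j)) → ∃ b, G t (insert (X u l, b) p) := by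
    intro j hj
    refine ⟨esc j, h.insert_nonmarker (PH.insert hq h.ph hx (.Xe _ _ _) ?_ ?_) ?_ h.tau_X⟩
    · intro y b' hy hne hb
      cases hb with
      | inv h => exact h (.Xe _ _ _)
      | fn h _ => exact hne h.symm
    · intro y b' hy hne hv hb
      have := hj y b' hy hv
      cases hb with
      | inv h => exact h hv
      | fn h _ => exact hne h
      | mkT e h1 h2 => exact this (.inl ⟨_, by rw [e]⟩) (.mkT e h1 h2)
      | mkX e h1 h2 => exact this (.inr ⟨_, _, by rw [e]⟩) (.mkX e h1 h2)
      | pTe e h1 h2 => exact this (.inl ⟨_, by rw [h1]⟩) (.pTe e h1 h2)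
      | pXe e h1 h2 => exact this (.inr ⟨_, _, by rw [h1]⟩) (.pXe e h1 h2)
    · rintro u (⟨σ, h⟩ | ⟨l, a, h⟩) <;> cases h
  by_cases hmiss : ∃ j, ∀ e ∈ p, ¬ Marker j e
  · obtain ⟨j, hj⟩ := hmiss
    exact escape j fun y b' hy _ hM => absurd hM (hj _ hy)
  push Not at hmiss
  choose M hMp hMm using hmiss
  have hMinj : Function.Injective M := by
    intro i j hij
    have := hMm j
    rw [← hij] at this
    exact (hMm i).unique this
  have himg : Finset.univ.image M = p := by
    apply Finset.eq_of_subset_of_card_le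
    · intro e he
      simp only [Finset.mem_image, Finset.mem_univ, true_and] at he
      obtain ⟨i, rfl⟩ := he
      exact hMp i
    · rw [Finset.card_image_of_injective _ hMinj]; simpa using hp
  have hall : ∀ e ∈ p, ∃ j, e = M j := by
    intro e he
    rw [← himg] at he
    simp only [Finset.mem_image, Finset.mem_univ, true_and] at he
    obtain ⟨j, hj⟩ := he
    exact ⟨j, hj.symm⟩
  have huniq : ∀ e ∈ p, ∀ j, Marker j e → e = M j := by
    intro e he j hj
    obtain ⟨i, rfl⟩ := hall e he
    rw [(hMm i).unique hj]
  obtain ⟨C, hC, hI, hT⟩ := h.cnt M fun u => ⟨hMp u, hMm u⟩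
  have succmod : ∀ c, (PG.cnt q (c % (2 * q)) (c / (2 * q) % m) + 1) % (2 * q) = (c + 1) % (2 * q) := by
    intro c; rw [cnt_mod, Nat.add_mod, Nat.mod_mul_right_mod, ← Nat.add_mod]
  have succdiv : ∀ c, (PG.cnt q (c % (2 * q)) (c / (2 * q) % m) + 1) / (2 * q) % m
      = (c + 1) / (2 * q) % m := by
    intro c
    rw [cnt_mod, ← Nat.mod_mul_right_div_self, ← Nat.mod_mul_right_div_self, Nat.mod_add_mod]
  by_cases hl : l.val = C u % (2 * q)
  swap
  · refine escape u ?_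
    intro y b' hy hv hM hb
    have e := huniq _ hy _ hM
    have hr := hC u
    rw [← e] at hr
    cases hb with
    | inv h => exact h hv
    | fn h _ => subst h; exact hx _ hy
    | mkT e h1 h2 => exact h1 e
    | mkX e h1 h2 => exact h1 e
    | pTe e h1 h2 =>
      rcases hr with ⟨h0, _⟩ | ⟨c, l', a, h0, h3, _⟩
      · apply hl; rw [h0, h2]; simp
      · cases h3
    | pXe e h1 h2 =>
      rcases hr with ⟨h0, _, h3⟩ | ⟨c, l', a, h0, h3, h4, h5⟩
      · cases h3
      · cases h3
        rw [h4, h5, succmod] at h2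
        exact hl (by rw [h2, h0])
  by_cases hkill : ∃ j, j ≠ u ∧ ¬ Bad (M j).1 (M j).2 (X u l) (esc j)
  · obtain ⟨j, hju, hj⟩ := hkill
    refine escape j ?_
    intro y b' hy hv hM
    have e := huniq _ hy _ hM
    rw [← e] at hj
    exact hj
  push Not at hkill
  -- the forced increment
  set C' := Function.update C u (C u + 1) with hC'
  have hI' : Inv q m C' := by
    intro v w hvw
    have hne : v ≠ w := by rintro rfl; omega
    have h0 := hI v w hvw
    by_cases hw : w = u
    · subst hw
      rw [hC', Function.update_self, Function.update_of_ne hne]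
      have hk := hkill v hne
      have hr := hC v
      generalize M v = e at hk hr
      rcases hr with ⟨h3, σ, rfl⟩ | ⟨c, l', a, h3, rfl, h4, h5⟩
      · exfalso
        cases hk with
        | inv h => exact h (.Tb _ _)
        | fn h _ => cases h
        | mkT _ _ h => exact h hvw
        | pTe h _ _ => exact hne h
      · have hk2 : q * m ∣ PG.cnt q l'.val a.val ∧
            (PG.cnt q l'.val a.val / (q * m)) % 2 = l.val % 2 := by
          cases hk with
          | inv h => exact absurd (.Xn _ _ _) h
          | fn h _ => exact absurd (by cases h; rfl) hne
          | mkX _ _ h => exact h hvw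
          | pXe h _ _ => exact absurd h hne
        rw [h4, h5, cnt_mod, dvd_par.1, dvd_par.2, hl, Nat.mod_mul_right_mod] at hk2
        obtain ⟨⟨d, rfl⟩, hd⟩ := hk2
        have hpos : 0 < q * m := by positivity
        rw [Nat.mul_div_cancel_left _ hpos] at hd
        have h6 : q * m * C w ≤ q * m * (d + 1) := by rw [h3] at h0; nlinarith
        have h7 : C w ≤ d + 1 := Nat.le_of_mul_le_mul_left h6 hpos
        have h8 : C w ≤ d := by omega
        have h9 := Nat.mul_le_mul_left (q * m) h8
        rw [h3]; nlinarith
    · rw [hC', Function.update_of_ne hw]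
      by_cases hv : v = u
      · subst hv; rw [Function.update_self]; omega
      · rw [Function.update_of_ne hv]; exact h0
  have hT' : ∀ v : Fin L, v.val = 0 → C' v + t ≤ Tmax L q m := by
    intro v hv
    have := hT v hv
    by_cases hvu : v = u
    · subst hvu; rw [hC', Function.update_self]; omega
    · rw [hC', Function.update_of_ne hvu]; omega
  have htop : u.val + 1 = L → C u < 2 * q * m := by
    intro hu
    by_contra hcon
    push Not at hcon
    have h1 := inv_chain hI' (by omega) u.val u.isLt
    have h2 := hT' ⟨0, by omega⟩ rfl
    have h3 : C' u = C u + 1 := by rw [hC', Function.update_self]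
    rw [Fin.eta, h3] at h1
    have h4 : L - 1 = u.val := by omega
    unfold Tmax at h2
    rw [h4] at h2
    have := Nat.mul_le_mul_left ((q * m) ^ u.val) hcon
    nlinarith
  have hval : C u / (2 * q) % m < m := Nat.mod_lt _ hm
  refine ⟨num ⟨C u / (2 * q) % m, hval⟩, PH.insert hq h.ph hx (.Xn _ _ _) ?_ ?_, h.tau_X, ?_, ?_⟩
  · intro y b' hy hne hb
    obtain ⟨j, hj⟩ := hall _ hy
    have hM := hMm j
    rw [← hj] at hM
    cases hb with
    | inv h => exact h (.Xn _ _ _)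
    | fn h _ => exact hne h.symm
    | mkX => rcases hM with ⟨_, h⟩ | ⟨_, _, h⟩ <;> cases h
    | pXe => rcases hM with ⟨_, h⟩ | ⟨_, _, h⟩ <;> cases h
    | pXn e h2 _ =>
      rename_i l' a'
      subst e
      have e := huniq _ hy _ (.inr ⟨_, _, rfl⟩)
      have hr := hC u
      rw [← e] at hr
      rcases hr with ⟨h0, _, h3⟩ | ⟨c, l'', a, h0, h3, h4, h5⟩
      · cases h3
      · cases h3
        simp only [hl, cnt_mod] at h2
        rw [h4, h0, Nat.add_mod, Nat.mod_mul_right_mod, ← Nat.add_mod] at h2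
        have h6 : (c + 0) % (2 * q) = (c + 2) % (2 * q) := by simpa [add_assoc] using h2
        have h7 : (0 : ℕ) ≡ 2 [MOD 2 * q] := Nat.ModEq.add_left_cancel' c h6
        unfold Nat.ModEq at h7
        rw [Nat.mod_eq_of_lt (by omega), Nat.mod_eq_of_lt (by omega)] at h7
        omega
  · intro y b' hy hne hv hb
    cases hb with
    | inv h => exact h hv
    | fn h _ => exact hne h
    | pTn e h1 h2 =>
      replace e := e.symm
      subst e
      have e := huniq _ hy _ (.inl ⟨_, rfl⟩)
      have hr := hC u
      rw [← e] at hr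
      rcases hr with ⟨h0, _⟩ | ⟨c, l', a, h0, h3, _⟩
      · apply h2; simp [h0]
      · cases h3
    | pXn e h1 h2 =>
      replace e := e.symm
      subst e
      have e := huniq _ hy _ (.inr ⟨_, _, rfl⟩)
      have hr := hC u
      rw [← e] at hr
      rcases hr with ⟨h0, _, h3⟩ | ⟨c, l', a, h0, h3, h4, h5⟩
      · cases h3
      · cases h3
        rw [h4, h5, succdiv, cnt_mod] at h2
        rcases h2 with h2 | ⟨h2, h6⟩
        · apply h2; simp only [h0]
        · have := htop h2
          rw [Nat.mod_eq_of_lt (by omega)] at h6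
          omega
  · intro M' hM'
    have hother : ∀ v, v ≠ u → M' v = M v := by
      intro v hv
      rcases Finset.mem_insert.1 (hM' v).1 with h' | h'
      · have h3 := (hM' v).2
        rw [h'] at h3
        exact absurd (h3.unique (.inr ⟨_, _, rfl⟩)) hv
      · exact huniq _ h' _ (hM' v).2
    rcases Finset.mem_insert.1 (hM' u).1 with h' | h'
    · refine ⟨C', ?_, hI', hT'⟩
      intro v
      by_cases hv : v = u
      · subst hv
        rw [h', hC', Function.update_self]
        exact .inr ⟨C v, _, _, rfl, rfl, hl, rfl⟩
      · rw [hother v hv, hC', Function.update_of_ne hv]; exact hC v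
    · refine ⟨C, ?_, hI, fun v hv => by have := hT v hv; omega⟩
      intro v
      by_cases hv : v = u
      · subst hv
        rw [huniq _ h' _ (hM' v).2]; exact hC v
      · rw [hother v hv]; exact hC v
  · have := h.ht; omega

theorem step (hq : 2 ≤ q) (hm : 0 < m) {t : ℕ} {p p' : Pos L q m} (h : G (t + 1) p)
    (hs : p' ⊆ p) (hp : p'.card ≤ L) (x : Var L q) : ∃ b, G t (insert (x, b) p') := by
  by_cases hx : ∃ b, (x, b) ∈ p'
  · obtain ⟨b, hb⟩ := hx
    exact ⟨b, by rw [Finset.insert_eq_of_mem hb]; exact h.mono hs (Nat.le_succ t)⟩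
  · push Not at hx
    have h' := h.mono hs le_rfl
    cases x with
    | S i => exact step_S hq h' i hx
    | T j σ => exact step_T hq hm h' hp j σ hx
    | X u l => exact step_X hq hm h' hp u l hx

theorem G_empty (hL : 0 < L) : G (Tmax L q m) (∅ : Pos L q m) where
  ph := fun e he => absurd he (Finset.notMem_empty _)
  tau := ⟨fun _ => true, by simp, by simp⟩
  cnt := fun M hM => absurd (hM ⟨0, hL⟩).1 (Finset.notMem_empty _)
  ht := le_rfl

/-! ### Transfer to relational structures -/

def strA {n : ℕ} : RelStruct (Fin n × Fin n) (Fin n) := ⟨fun R t => t = [R.1, R.2]⟩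

def strB {n m' : ℕ} (f : Fin n → Var L q) (g : Fin m' → Val L m) :
    RelStruct (Fin n × Fin n) (Fin m') :=
  ⟨fun R t => ∃ b b', t = [b, b'] ∧ ¬ Bad (f R.1) (g b) (f R.2) (g b')⟩

theorem binA {n : ℕ} : CSP.Binary (strA : RelStruct (Fin n × Fin n) (Fin n)) := by
  rintro R t rfl; simp

theorem binB {n m' : ℕ} (f : Fin n → Var L q) (g : Fin m' → Val L m) :
    CSP.Binary (strB f g) := by
  rintro R t ⟨b, b', rfl, _⟩; simp

section transfer

variable {n m' : ℕ} {f : Fin n → Var L q} {g : Fin m' → Val L m}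

def im (f : Fin n → Var L q) (g : Fin m' → Val L m) (p : Finset (Fin n × Fin m')) : Pos L q m :=
  p.image fun e => (f e.1, g e.2)

theorem ph_of_hom {p : Finset (Fin n × Fin m')} (h : CSP.PartialHom strA (strB f g) p) :
    PH (im f g p) := by
  intro e he e' he'
  simp only [im, Finset.mem_image] at he he'
  obtain ⟨⟨x, b⟩, hx, rfl⟩ := he
  obtain ⟨⟨y, b'⟩, hy, rfl⟩ := he'
  obtain ⟨c, c', h1, h2⟩ := h.2 (x, y) [x, y] [b, b'] (by simp [hx, hy]) rfl
  simp only [List.cons.injEq, and_true] at h1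
  obtain ⟨rfl, rfl⟩ := h1
  exact h2

theorem hom_of_ph {p : Finset (Fin n × Fin m')} (h : PH (im f g p))
    (sec : Val L m → Fin m') (hsec : ∀ e ∈ p, e.2 = sec (g e.2)) :
    CSP.PartialHom strA (strB f g) p := by
  have hm : ∀ e ∈ p, (f e.1, g e.2) ∈ im f g p := fun e he => Finset.mem_image_of_mem _ he
  constructor
  · intro x y y' h1 h2
    have e1 : y = sec (g y) := hsec _ h1
    have e2 : y' = sec (g y') := hsec _ h2
    by_contra hne
    exact h _ (hm _ h1) _ (hm _ h2)
      (.fn rfl fun hg => hne (e1.trans ((congrArg sec hg).trans e2.symm)))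
  · rintro ⟨x, y⟩ t t' ht rfl
    cases ht with
    | cons h1 ht =>
      cases ht with
      | cons h2 ht =>
        cases ht
        exact ⟨_, _, rfl, h _ (hm _ h1) _ (hm _ h2)⟩

theorem spoiler_mono {k d d' : ℕ} {p : Finset (Fin n × Fin m')} (hd : d ≤ d')
    (h : CSP.SpoilerWin strA (strB f g) k p d) : CSP.SpoilerWin strA (strB f g) k p d' := by
  induction h generalizing d' with
  | win h => exact .win h
  | move p' x h1 h2 h3 ih =>
    obtain ⟨d', rfl⟩ : ∃ e, d' = e + 1 := ⟨d' - 1, by omega⟩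
    exact .move p' x h1 h2 fun b => ih b (by omega)

theorem spoiler_of_win (hf : Function.Surjective f) {p₀ : Pos L q m}
    (h : Win p₀) : ∀ p : Finset (Fin n × Fin m'), p₀ ⊆ im f g p →
      ∃ d, CSP.SpoilerWin strA (strB f g) (L + 1) p d := by
  induction h with
  | lose h =>
    intro p hp
    exact ⟨0, .win fun h' => h ((ph_of_hom h').mono hp)⟩
  | move p₀' x h1 h2 h3 ih =>
    intro p hp
    have hsub := h1.trans hp
    obtain ⟨p', hp', hcard, himg⟩ : ∃ p' ⊆ p, p'.card ≤ L ∧ p₀' ⊆ im f g p' := by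
      have : ∀ e : p₀', ∃ e' ∈ p, (f e'.1, g e'.2) = e.1 := fun e =>
        Finset.mem_image.1 (hsub e.2)
      choose s hs1 hs2 using this
      refine ⟨Finset.univ.image s, ?_, ?_, ?_⟩
      · intro e he
        simp only [Finset.mem_image, Finset.mem_univ, true_and] at he
        obtain ⟨a, rfl⟩ := he
        exact hs1 a
      · exact Finset.card_image_le.trans (by simpa using h2)
      · intro e he
        refine Finset.mem_image.2 ⟨s ⟨e, he⟩, Finset.mem_image_of_mem _ (Finset.mem_univ _), ?_⟩
        exact hs2 ⟨e, he⟩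
    obtain ⟨y, rfl⟩ := hf x
    have := fun b => ih (g b) (insert (y, b) p') (by
      intro e he
      rcases Finset.mem_insert.1 he with rfl | he
      · exact Finset.mem_image.2 ⟨(y, b), Finset.mem_insert_self _ _, rfl⟩
      · obtain ⟨e', h5, h6⟩ := Finset.mem_image.1 (himg he)
        exact Finset.mem_image.2 ⟨e', Finset.mem_insert_of_mem h5, h6⟩)
    choose D hD using this
    exact ⟨Finset.univ.sup D + 1, .move p' y hp' (by omega) fun b =>
      spoiler_mono (Finset.le_sup (Finset.mem_univ b)) (hD b)⟩

theorem dup (hq : 2 ≤ q) (hm : 0 < m) (sec : Val L m → Fin m') (hsec : ∀ v, g (sec v) = v)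
    {d : ℕ} {p : Finset (Fin n × Fin m')}
    (h : CSP.SpoilerWin strA (strB f g) (L + 1) p d)
    (hp : ∀ e ∈ p, e.2 = sec (g e.2)) : ¬ G d (im f g p) := by
  induction h with
  | win h => exact fun hG => h (hom_of_ph hG.ph sec hp)
  | move p' x h1 h2 h3 ih =>
    intro hG
    obtain ⟨b, hb⟩ := step hq hm hG (p' := im f g p') (Finset.image_subset_image h1)
      (Finset.card_image_le.trans (by omega)) (f x)
    refine ih (sec b) ?_ ?_
    · intro e he
      rcases Finset.mem_insert.1 he with rfl | he
      · simp [hsec]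
      · exact hp e (h1 he)
    · have : im f g (insert (x, sec b) p') = insert (f x, b) (im f g p') := by
        simp [im, Finset.image_insert, hsec]
      rwa [this]

end transfer

theorem surj_of_card {n : ℕ} {α : Type} [Fintype α] [Nonempty α] (h : Fintype.card α ≤ n) :
    ∃ f : Fin n → α, Function.Surjective f := by
  obtain ⟨e⟩ : Nonempty (α ↪ Fin n) := Function.Embedding.nonempty_of_card_le (by simpa using h)
  exact ⟨Function.invFun e, Function.invFun_surjective e.injective⟩

theorem surj_Var {n : ℕ} (hL : 0 < L) (h : L + L * 2 ^ L + L * (2 * q) ≤ n) :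
    ∃ f : Fin n → Var L q, Function.Surjective f := by
  haveI : Nonempty (Fin L ⊕ (Fin L × (Fin L → Bool)) ⊕ (Fin L × Fin (2 * q))) := ⟨.inl ⟨0, hL⟩⟩
  obtain ⟨f, hf⟩ := surj_of_card (n := n)
    (α := Fin L ⊕ (Fin L × (Fin L → Bool)) ⊕ (Fin L × Fin (2 * q))) (by simp; omega)
  refine ⟨fun i => match f i with
    | .inl i => S i
    | .inr (.inl (u, σ)) => T u σ
    | .inr (.inr (u, l)) => X u l, ?_⟩
  intro x
  cases x with
  | S i => obtain ⟨a, ha⟩ := hf (.inl i); exact ⟨a, by simp [ha]⟩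
  | T u σ => obtain ⟨a, ha⟩ := hf (.inr (.inl (u, σ))); exact ⟨a, by simp [ha]⟩
  | X u l => obtain ⟨a, ha⟩ := hf (.inr (.inr (u, l))); exact ⟨a, by simp [ha]⟩

theorem surj_Val {n : ℕ} (h : 2 + L + m ≤ n) :
    ∃ f : Fin n → Val L m, Function.Surjective f := by
  obtain ⟨f, hf⟩ := surj_of_card (n := n) (α := Bool ⊕ Fin L ⊕ Fin m) (by simp; omega)
  refine ⟨fun i => match f i with
    | .inl b => bit b
    | .inr (.inl j) => esc j
    | .inr (.inr a) => num a, ?_⟩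
  intro x
  cases x with
  | bit i => obtain ⟨a, ha⟩ := hf (.inl i); exact ⟨a, by simp [ha]⟩
  | esc u => obtain ⟨a, ha⟩ := hf (.inr (.inl u)); exact ⟨a, by simp [ha]⟩
  | num u => obtain ⟨a, ha⟩ := hf (.inr (.inr u)); exact ⟨a, by simp [ha]⟩

end PG

/-- for every `k ≥ 2` there are `ε > 0` and `n₀, m₀ ≥ 1` such that for all
`n ≥ n₀`, `m ≥ m₀` there are binary relational structures `A` (with `n` elements) and
`B` (with `m` elements) over a common finite vocabulary such that Spoiler has a winning
strategy in the existential `k`-pebble game on `A` and `B`, but no strategy winning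
within fewer than `ε · n^(k-1) · m^(k-1)` rounds. -/
theorem pebble_game_round_lower_bound (k : ℕ) (hk : 2 ≤ k) :
    ∃ ε : ℝ, 0 < ε ∧ ∃ n₀ m₀ : ℕ, 0 < n₀ ∧ 0 < m₀ ∧
      ∀ n m : ℕ, n₀ ≤ n → m₀ ≤ m →
        ∃ (ι : Type) (_ : Fintype ι) (A : RelStruct ι (Fin n)) (B : RelStruct ι (Fin m)),
          CSP.Binary A ∧ CSP.Binary B ∧
          (∃ d, CSP.SpoilerWin A B k (∅ : Finset (Fin n × Fin m)) d) ∧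
          ∀ d : ℕ, (d : ℝ) < ε * (n : ℝ) ^ (k - 1) * (m : ℝ) ^ (k - 1) →
            ¬ CSP.SpoilerWin A B k (∅ : Finset (Fin n × Fin m)) d := by
  obtain ⟨L, rfl⟩ : ∃ L, k = L + 1 := ⟨k - 1, by omega⟩
  have hL : 0 < L := by omega
  have hLr : (0 : ℝ) < L := by exact_mod_cast hL
  refine ⟨(1 / (16 * L)) ^ L, by positivity, 8 * L + 2 * (L + L * 2 ^ L), 2 * (L + 2),
    by omega, by omega, ?_⟩
  intro n m hn hm
  obtain ⟨q, hqdef⟩ : ∃ q, q = n / (4 * L) := ⟨_, rfl⟩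
  obtain ⟨r, hr⟩ : ∃ r, m = r + (L + 2) := ⟨m - (L + 2), by omega⟩
  have hq : 2 ≤ q := by
    rw [hqdef, Nat.le_div_iff_mul_le (by omega)]; omega
  have hq1 : q * (4 * L) ≤ n := by rw [hqdef]; exact Nat.div_mul_le_self _ _
  have hq2 : n < (q + 1) * (4 * L) := by
    rw [hqdef]; exact Nat.lt_mul_of_div_lt (Nat.lt_succ_self _) (by omega)
  have hr0 : 0 < r := by omega
  obtain ⟨f, hf⟩ := PG.surj_Var (L := L) (q := q) (n := n) hL (by nlinarith)
  obtain ⟨g, hg⟩ := PG.surj_Val (L := L) (m := r) (n := m) (by omega)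
  refine ⟨Fin n × Fin n, inferInstance, PG.strA, PG.strB f g, PG.binA, PG.binB f g, ?_, ?_⟩
  · exact PG.spoiler_of_win hf (PG.win_start hq hr0 hL) ∅ (Finset.empty_subset _)
  · intro d hd hw
    refine PG.dup hq hr0 (Function.surjInv hg) (Function.surjInv_eq hg) hw (by simp) ?_
    have hdT : d ≤ PG.Tmax L q r := by
      have h1 : (n : ℝ) ≤ 8 * L * q := by
        have : n ≤ 8 * L * q := by nlinarith
        exact_mod_cast this
      have h2 : (m : ℝ) ≤ 2 * r := by
        have : m ≤ 2 * r := by omega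
        exact_mod_cast this
      have h3 : (1 / (16 * L) : ℝ) * n * m ≤ q * r := by
        have h4 : (n : ℝ) * m ≤ (8 * L * q) * (2 * r) := by gcongr
        rw [mul_assoc, one_div, inv_mul_le_iff₀ (by positivity)]
        linarith
      have h5 : (d : ℝ) < (q * r : ℝ) ^ L := by
        refine lt_of_lt_of_le hd ?_
        rw [Nat.add_sub_cancel, ← mul_pow, ← mul_pow]
        gcongr
      have h6 : d < (q * r) ^ L := by exact_mod_cast h5
      have h7 : (q * r) ^ L ≤ PG.Tmax L q r := by
        unfold PG.Tmax
        obtain ⟨K, rfl⟩ : ∃ K, L = K + 1 := ⟨L - 1, by omega⟩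
        rw [Nat.add_sub_cancel, pow_succ]
        exact Nat.mul_le_mul_left _ (by nlinarith [Nat.zero_le (q * r)])
      omega
    have := (PG.G_empty (L := L) (q := q) (m := r) hL).mono subset_rfl hdT
    simpa [PG.im] using this
end

section
/- For every integer k ≥ 3 there exist a constant c > 0 and positive integers n_0, m_0 such that for all n ≥ n_0 and m ≥ m_0 there exist finite vertex-colored graphs A and B with |V(A)| ≤ c·n and |V(B)| ≤ c·m with the following properties: Spoiler has a winning strategy in the existential k-pebble game on A and B, and, setting N = n^(k−1) · m^(k−1), Duplicator has critical strategies G^start, F_1, G_1, F_2, G_2, …, G_{N−2}, F_{N−1} in the existential k-pebble game on A and B satisfying crit(G^start) ⊆ F_1 ∖ crit(F_1), crit(G_i) ⊆ (F_{i+1} ∖ crit(F_{i+1})) ∪ (G^start ∖ crit(G^start)) for all 1 ≤ i ≤ N−2, and crit(F_i) ⊆ (G_i ∖ crit(G_i)) ∪ (G^start ∖ crit(G^start)) for all 1 ≤ i ≤ N−2. -/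
/-- A vertex-colored (finite simple) graph on vertex type `V` with colors in `C`. -/
structure ColoredGraph (V : Type) (C : Type) where
  graph : SimpleGraph V
  color : V → C

namespace PebbleCG

variable {α β C : Type}

/-- A finite set of pairs is a partial map if it is functional. -/
def Functional (p : Finset (α × β)) : Prop :=
  ∀ ⦃x : α⦄ ⦃y y' : β⦄, (x, y) ∈ p → (x, y') ∈ p → y = y'

/-- `p` is a partial homomorphism between the vertex-colored graphs `A` and `B`:
a partial map that preserves colors and maps edges to edges. -/
def PartialHom (A : ColoredGraph α C) (B : ColoredGraph β C) (p : Finset (α × β)) : Prop :=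
  Functional p ∧
  (∀ ⦃x y⦄, (x, y) ∈ p → B.color y = A.color x) ∧
  (∀ ⦃x y x' y'⦄, (x, y) ∈ p → (x', y') ∈ p → A.graph.Adj x x' → B.graph.Adj y y')

/-- Spoiler wins the existential `K`-pebble game played on the vertex sets `S` of `A`
and `D` of `B`, starting from position `p` (after finitely many rounds): either the
position is already not a partial homomorphism, or Spoiler can pick up pebbles and place
a free pebble on some `x ∈ S` so that he wins against every answer `b ∈ D`. -/
inductive SpoilerWins [DecidableEq α] [DecidableEq β]
    (A : ColoredGraph α C) (B : ColoredGraph β C)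
    (S : Set α) (D : Set β) (K : ℕ) : Finset (α × β) → Prop
  | win {p : Finset (α × β)} :
      ¬ PartialHom A B p → SpoilerWins A B S D K p
  | move {p : Finset (α × β)} (p' : Finset (α × β)) (x : α) :
      p' ⊆ p → p'.card < K → x ∈ S →
      (∀ b ∈ D, SpoilerWins A B S D K (insert (x, b) p')) →
      SpoilerWins A B S D K p

/-- `SpoilerReach A B S D K p q`: starting from position `p`, Spoiler has a strategy in
the existential `K`-pebble game (played on the vertex sets `S` and `D`) guaranteeing
that after finitely many rounds he has either won or reached exactly the position `q`. -/
inductive SpoilerReach [DecidableEq α] [DecidableEq β]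
    (A : ColoredGraph α C) (B : ColoredGraph β C)
    (S : Set α) (D : Set β) (K : ℕ) : Finset (α × β) → Finset (α × β) → Prop
  | refl {p : Finset (α × β)} : SpoilerReach A B S D K p p
  | win {p q : Finset (α × β)} :
      ¬ PartialHom A B p → SpoilerReach A B S D K p q
  | move {p q : Finset (α × β)} (p' : Finset (α × β)) (x : α) :
      p' ⊆ p → p'.card < K → x ∈ S →
      (∀ b ∈ D, SpoilerReach A B S D K (insert (x, b) p') q) →
      SpoilerReach A B S D K p q

/-- `H` together with the set `crit ⊆ H` of critical positions is a critical strategy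
for Duplicator in the existential `K`-pebble game on the vertex-colored graphs `A`
(restricted to `S`) and `B` (restricted to `D`).  If `crit = ∅` it is a winning
strategy. -/
structure IsCriticalStrategy [DecidableEq α] [DecidableEq β]
    (A : ColoredGraph α C) (B : ColoredGraph β C)
    (S : Set α) (D : Set β) (K : ℕ)
    (H crit : Set (Finset (α × β))) : Prop where
  nonempty : H.Nonempty
  crit_subset : crit ⊆ H
  mem_SD : ∀ p ∈ H, ∀ z ∈ p, Prod.fst z ∈ S ∧ Prod.snd z ∈ D
  isHom : ∀ p ∈ H, PartialHom A B p
  crit_card : ∀ p ∈ crit, p.card = K - 1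
  downward : ∀ p ∈ H, ∀ q ⊆ p, q ∈ H
  extend : ∀ g ∈ H, g ∉ crit → g.card < K → ∀ x ∈ S, ∃ b ∈ D, insert (x, b) g ∈ H

/-- The family `H` of positions has boundary function `f` on the (Spoiler-side) boundary
`bS`: every position of `H` agrees with `f` on boundary vertices in its domain. -/
def HasBoundaryFun (H : Set (Finset (α × β))) (bS : Set α) (f : α → β) : Prop :=
  ∀ h ∈ H, ∀ z ∈ bS, ∀ y : β, (z, y) ∈ h → y = f z

end PebbleCG

namespace CSE

open PebbleCG

/-! ### The construction

`W`-vertices: `r+1` pigeons with values in `Fin (r+1)`, pairwise different.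
`X`-vertices: `(u, x)` with `u` a class in `ZMod (3r)` and `x : Fin (2n)`.  Values are either
`real y b` (`y : Fin m` and an incoming carry bit) or harmless values `(J, j')`. -/

abbrev Val (r m : ℕ) : Type := (Fin m × Bool) ⊕ ((Fin r ⊕ Bool) × Fin r)
abbrev VA (r n : ℕ) : Type := Fin (r + 1) ⊕ (ZMod (3 * r) × Fin (2 * n))
abbrev VB (r m : ℕ) : Type := Fin (r + 1) ⊕ (ZMod (3 * r) × Fin 3 × Val r m)
abbrev Col (r : ℕ) : Type := Option (ZMod (3 * r) × Fin 3)

/-- color tag of an index -/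
def tag {n : ℕ} (x : Fin (2 * n)) : Fin 3 :=
  if x.val = 0 then 0 else if x.val % 2 = 1 then 1 else 2

/-- the index stays or advances by one -/
def Stp {n : ℕ} (x z : Fin (2 * n)) : Prop := z = x ∨ z.val = (x.val + 1) % (2 * n)

def Moved {m : ℕ} (b : Bool) (y : Fin m) : Prop := b = true ∧ y.val + 1 = m

/-- the incoming carry for class `u` as computed from its predecessor -/
def Cin {r m : ℕ} (u : ZMod (3 * r)) (t : Fin 3) (y : Fin m) (b : Bool) : Prop :=
  u.val % r = 0 ∨ (b = true ∧ t = 0 ∧ y.val = 0)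

/-- directed edges of the Spoiler graph -/
def EA {r n : ℕ} : VA r n → VA r n → Prop
  | Sum.inl w, Sum.inl w' => w ≠ w'
  | Sum.inl _, Sum.inr _ => True
  | Sum.inr (v, x), Sum.inr (u, z) =>
      ∃ j : Fin r, u = v + ((j.val + 1 : ℕ) : ZMod (3 * r)) ∧ (j.val + 1 = r → Stp x z)
  | Sum.inr _, Sum.inl _ => False

/-- constraint between a pigeon value and a value at class `u` with tag `t` -/
def CW {r m : ℕ} (w : Fin (r + 1)) (u : ZMod (3 * r)) (t : Fin 3) : Val r m → Prop
  | Sum.inl (y, b) => w.val = 1 → (u.val < r ∧ t = 0 ∧ y.val = 0 ∧ b = true)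
  | Sum.inr (_, j') => (u.val < r ∧ t = 0) → j'.val + 1 ≠ u.val + w.val

/-- constraint between two values at distance `j+1` -/
def CX {r m : ℕ} (j : Fin r) (u : ZMod (3 * r)) (t' t : Fin 3) : Val r m → Val r m → Prop
  | Sum.inr _, _ => True
  | Sum.inl (y', b'), Sum.inr (J, j') =>
      J ≠ Sum.inl j ∧
      (∀ β, J = Sum.inr β → (j.val = 0 → (β = true ↔ Cin u t' y' b')) ∧
        (j.val + 1 = r → ¬ (Moved β y' ↔ t ≠ t'))) ∧
      ((u.val < r ∧ t = 0) → j.val + 1 ≤ u.val → j' ≠ j)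
  | Sum.inl (y', b'), Sum.inl (y, β) =>
      (j.val = 0 → (β = true ↔ Cin u t' y' b')) ∧
      (j.val + 1 = r → (Moved β y' ↔ t ≠ t') ∧
        (Moved β y' → y.val = 0 ∧ ¬ (t = 0 ∧ u.val % r + 1 = r)) ∧
        (¬ Moved β y' → y.val = y'.val + (if β then 1 else 0)))

/-- directed edges of the Duplicator graph -/
def EB {r m : ℕ} : VB r m → VB r m → Prop
  | Sum.inl w, Sum.inl w' => w ≠ w'
  | Sum.inl w, Sum.inr (u, t, a) => CW w u t a
  | Sum.inr (v, t', a), Sum.inr (u, t, b) =>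
      ∃ j : Fin r, u = v + ((j.val + 1 : ℕ) : ZMod (3 * r)) ∧ CX j u t' t a b
  | Sum.inr _, Sum.inl _ => False

lemma cast_inj {r : ℕ} {a b : ℕ} (ha : a < 3 * r) (hb : b < 3 * r)
    (h : (a : ZMod (3 * r)) = (b : ZMod (3 * r))) : a = b := by
  rw [ZMod.natCast_eq_natCast_iff'] at h
  rwa [Nat.mod_eq_of_lt ha, Nat.mod_eq_of_lt hb] at h

lemma cast_ne_zero {r : ℕ} {a : ℕ} (ha : a < 3 * r) (h0 : 0 < a) :
    (a : ZMod (3 * r)) ≠ 0 := by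
  intro h
  have := cast_inj (b := 0) ha (by omega) (by simpa using h)
  omega

lemma no_two {r : ℕ} {u v : ZMod (3 * r)} {a b : ℕ} (h1 : 0 < a + b) (h2 : a + b < 3 * r)
    (h : u = v + (a : ZMod (3 * r))) (h' : v = u + (b : ZMod (3 * r))) : False := by
  apply cast_ne_zero h2 h1
  push_cast
  have : v = v + ((a : ZMod (3 * r)) + b) := by rw [← add_assoc, ← h, ← h']
  exact (left_eq_add.mp this)

lemma dist_unique {r : ℕ} {u v : ZMod (3 * r)} {a b : ℕ} (ha : a < 3 * r) (hb : b < 3 * r)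
    (h : u = v + (a : ZMod (3 * r))) (h' : u = v + (b : ZMod (3 * r))) : a = b := by
  apply cast_inj ha hb
  rw [h] at h'
  exact add_left_cancel h'

def GA (r n : ℕ) : ColoredGraph (VA r n) (Col r) where
  graph :=
    { Adj := fun a b => EA a b ∨ EA b a
      symm := ⟨fun _ _ h => h.symm⟩
      loopless := ⟨by
        rintro (w | ⟨u, x⟩) h
        · rcases h with h | h <;> exact h rfl
        · have : ∃ j : Fin r, u = u + ((j.val + 1 : ℕ) : ZMod (3 * r)) ∧
              (j.val + 1 = r → Stp x x) := by rcases h with h | h <;> exact h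
          obtain ⟨j, hj, -⟩ := this
          have := j.isLt
          exact no_two (a := j.val + 1) (b := j.val + 1) (by omega) (by omega) hj hj⟩ }
  color := fun
    | Sum.inl _ => none
    | Sum.inr (u, x) => some (u, tag x)

def GB (r m : ℕ) : ColoredGraph (VB r m) (Col r) where
  graph :=
    { Adj := fun a b => EB a b ∨ EB b a
      symm := ⟨fun _ _ h => h.symm⟩
      loopless := ⟨by
        rintro (w | ⟨u, t, a⟩) h
        · rcases h with h | h <;> exact h rfl
        · have : ∃ j : Fin r, u = u + ((j.val + 1 : ℕ) : ZMod (3 * r)) ∧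
              CX j u t t a a := by rcases h with h | h <;> exact h
          obtain ⟨j, hj, -⟩ := this
          have := j.isLt
          exact no_two (a := j.val + 1) (b := j.val + 1) (by omega) (by omega) hj hj⟩ }
  color := fun
    | Sum.inl _ => none
    | Sum.inr (u, t, _) => some (u, t)

lemma tag_zero {n : ℕ} {x : Fin (2 * n)} : tag x = 0 ↔ x.val = 0 := by
  unfold tag; split_ifs <;> simp_all

lemma tag_ne {n : ℕ} {x z : Fin (2 * n)} (h : z.val = (x.val + 1) % (2 * n)) :
    tag z ≠ tag x := by
  have hx := x.isLt
  have h' : (x.val + 1 < 2 * n ∧ z.val = x.val + 1) ∨ (x.val + 1 = 2 * n ∧ z.val = 0) := by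
    rcases Nat.lt_or_ge (x.val + 1) (2 * n) with h1 | h1
    · left; rw [Nat.mod_eq_of_lt h1] at h; exact ⟨h1, h⟩
    · right
      have : x.val + 1 = 2 * n := by omega
      rw [this, Nat.mod_self] at h; exact ⟨this, h⟩
  unfold tag
  split_ifs <;> omega

/-- two admissible next indices with the same moved-status agree -/
lemma stp_unique {n : ℕ} {x z z' : Fin (2 * n)} (h : Stp x z) (h' : Stp x z')
    (ht : tag z ≠ tag x ↔ tag z' ≠ tag x) : z = z' := by
  rcases h with h | h <;> rcases h' with h' | h'
  · rw [h, h']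
  · exact absurd (by rw [h]) (ht.mpr (tag_ne h'))
  · exact absurd (by rw [h']) (ht.mp (tag_ne h))
  · exact Fin.ext (h.trans h'.symm)

/-! ### The token sequence -/

section seq
variable (r n m : ℕ)

/-- the digit -/
def dg (u : ℕ) : ℕ := (u / r / (2 * n * m) ^ (u % r)) % (2 * n * m)

/-- the carry bit -/
def bb (u : ℕ) : Bool := decide ((2 * n * m) ^ (u % r) ∣ u / r)

variable [NeZero n] [NeZero m]

lemma base_pos : 0 < 2 * n * m :=
  Nat.mul_pos (Nat.mul_pos (by norm_num) (NeZero.pos n)) (NeZero.pos m)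

lemma dg_lt (u : ℕ) : dg r n m u < 2 * n * m := Nat.mod_lt _ (base_pos n m)

def xx (u : ℕ) : Fin (2 * n) :=
  ⟨dg r n m u / m, Nat.div_lt_of_lt_mul (by rw [mul_comm]; exact dg_lt r n m u)⟩

def yy (u : ℕ) : Fin m := ⟨dg r n m u % m, Nat.mod_lt _ (NeZero.pos m)⟩

def T (u : ℕ) : VA r n × VB r m :=
  (Sum.inr ((u : ZMod (3 * r)), xx r n m u),
    Sum.inr ((u : ZMod (3 * r)), tag (xx r n m u), Sum.inl (yy r n m u, bb r n m u)))

lemma xy_zero (u : ℕ) : (tag (xx r n m u) = 0 ∧ (yy r n m u).val = 0) ↔ dg r n m u = 0 := by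
  rw [tag_zero]
  simp only [xx, yy]
  constructor
  · rintro ⟨h1, h2⟩
    have := Nat.div_add_mod (dg r n m u) m
    rw [h1, h2] at this; simpa using this.symm
  · intro h; rw [h]; simp

lemma cls_mod (u : ℕ) : ((u : ZMod (3 * r)).val) % r = u % r := by
  rw [ZMod.val_natCast, mul_comm, Nat.mod_mul_right_mod]

/-- predecessor relation -/
lemma pred_rel (hr : 2 ≤ r) (v : ℕ) :
    (bb r n m (v + 1) = true ↔ Cin ((v + 1 : ℕ) : ZMod (3 * r)) (tag (xx r n m v))
      (yy r n m v) (bb r n m v)) := by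
  unfold Cin
  rw [cls_mod, xy_zero]
  simp only [bb, decide_eq_true_eq]
  have hlt := Nat.mod_lt v (show 0 < r by omega)
  have hv := Nat.div_add_mod v r
  rcases Nat.lt_or_ge (v % r + 1) r with h | h
  · have h1 : (v + 1) % r = v % r + 1 := by
      rw [← hv, add_assoc, Nat.mul_add_mod, Nat.mod_eq_of_lt h]
      simp
    have h2 : (v + 1) / r = v / r := by
      conv_lhs => rw [← hv, add_assoc, Nat.mul_add_div (by omega), Nat.div_eq_of_lt h]
      simp
    rw [h1, h2]
    have h3 : ¬ (v % r + 1 = 0) := by omega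
    simp only [h3, false_or, dg]
    generalize v / r = c
    generalize v % r = i
    have hD := base_pos n m
    generalize 2 * n * m = D at hD
    have hP : 0 < D ^ i := by positivity
    rw [pow_succ]
    constructor
    · rintro ⟨e, rfl⟩
      refine ⟨⟨D * e, by ring⟩, ?_⟩
      rw [show D ^ i * D * e = D ^ i * (D * e) by ring, Nat.mul_div_cancel_left _ hP]
      simp
    · rintro ⟨⟨e, rfl⟩, h⟩
      rw [Nat.mul_div_cancel_left _ hP] at h
      obtain ⟨f, rfl⟩ := Nat.dvd_of_mod_eq_zero h
      exact ⟨f, by ring⟩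
  · have h1 : (v + 1) % r = 0 := by
      rw [← hv, add_assoc, Nat.mul_add_mod, show v % r + 1 = r by omega, Nat.mod_self]
    simp [h1]

/-- overflow time -/
def uend : ℕ := r * (2 * n * m) ^ r + (r - 1)

/-- digit arithmetic -/
lemma dg_step (hr : 2 ≤ r) (v : ℕ) :
    dg r n m (v + r) = (dg r n m v + (if bb r n m (v + r) then 1 else 0)) % (2 * n * m) := by
  simp only [dg, bb, Nat.add_mod_right, Nat.add_div_right v (show 0 < r by omega),
    decide_eq_true_eq, Nat.succ_div]
  rw [Nat.mod_add_mod]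

lemma old_stp (hr : 2 ≤ r) (v : ℕ) :
    Stp (xx r n m v) (xx r n m (v + r)) ∧
    (Moved (bb r n m (v + r)) (yy r n m v) ↔ tag (xx r n m (v + r)) ≠ tag (xx r n m v)) ∧
    (Moved (bb r n m (v + r)) (yy r n m v) → (yy r n m (v + r)).val = 0) ∧
    (¬ Moved (bb r n m (v + r)) (yy r n m v) → (yy r n m (v + r)).val =
      (yy r n m v).val + (if bb r n m (v + r) then 1 else 0)) := by
  have hs := dg_step r n m hr v
  have hd := dg_lt r n m v
  have hm : 0 < m := NeZero.pos m
  have hmod := Nat.mod_lt (dg r n m v) hm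
  have hdm := Nat.div_add_mod (dg r n m v) m
  have hxlt := (xx r n m v).isLt
  have key : (¬ Moved (bb r n m (v + r)) (yy r n m v) ∧ xx r n m (v + r) = xx r n m v ∧
        (yy r n m (v + r)).val = (yy r n m v).val + (if bb r n m (v + r) then 1 else 0)) ∨
      (Moved (bb r n m (v + r)) (yy r n m v) ∧
        (xx r n m (v + r)).val = ((xx r n m v).val + 1) % (2 * n) ∧
        (yy r n m (v + r)).val = 0) := by
    simp only [Moved, yy, xx, Fin.ext_iff] at hxlt ⊢
    generalize dg r n m (v + r) = d' at *
    generalize dg r n m v = d at *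
    cases hb : bb r n m (v + r)
    · left
      rw [hb] at hs
      simp only [Bool.false_eq_true, if_false, add_zero, Nat.mod_eq_of_lt hd] at hs
      subst hs; simp
    · rw [hb] at hs
      simp only [if_true] at hs ⊢
      by_cases hy : d % m + 1 = m
      · right
        refine ⟨⟨trivial, hy⟩, ?_⟩
        have e : d + 1 = m * (d / m + 1) := by rw [mul_add]; omega
        rw [hs, e, show 2 * n * m = m * (2 * n) by ring, Nat.mul_mod_mul_left]
        exact ⟨Nat.mul_div_cancel_left _ hm, Nat.mul_mod_right _ _⟩
      · left
        have hy' : d % m + 1 < m := by omega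
        have e : d + 1 = m * (d / m) + (d % m + 1) := by omega
        have hlt : d + 1 < 2 * n * m := by
          have : m * (d / m + 1) ≤ m * (2 * n) := Nat.mul_le_mul_left _ hxlt
          rw [mul_add] at this
          rw [show 2 * n * m = m * (2 * n) by ring]; omega
        rw [Nat.mod_eq_of_lt hlt] at hs
        refine ⟨fun h => hy h.2, ?_, ?_⟩
        · rw [hs, e, Nat.mul_add_div hm, Nat.div_eq_of_lt hy', add_zero]
        · rw [hs, e, Nat.mul_add_mod, Nat.mod_eq_of_lt hy']
  rcases key with ⟨h1, h2, h3⟩ | ⟨h1, h2, h3⟩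
  · exact ⟨Or.inl h2, ⟨fun h => absurd h h1, fun h => absurd (by rw [h2]) h⟩,
      fun h => absurd h h1, fun _ => h3⟩
  · exact ⟨Or.inr h2, ⟨fun _ => tag_ne h2, fun _ => h1⟩, fun _ => h3, fun h => absurd h1 h⟩

/-- no overflow before `uend` -/
lemma no_overflow (hr : 2 ≤ r) (v : ℕ) (hv : v + r < uend r n m)
    (hM : Moved (bb r n m (v + r)) (yy r n m v))
    (ht : tag (xx r n m (v + r)) = 0) (hi : (v + r) % r + 1 = r) : False := by
  have hy := (old_stp r n m hr v).2.2.1 hM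
  have h0 := (xy_zero r n m (v + r)).mp ⟨ht, hy⟩
  have hb := hM.1
  simp only [bb, decide_eq_true_eq] at hb
  simp only [dg] at h0
  have hc1 : 1 ≤ (v + r) / r := by exact (Nat.one_le_div_iff (by omega)).mpr (by omega)
  have hdm := Nat.div_add_mod (v + r) r
  unfold uend at hv
  have hc2 : (v + r) / r < (2 * n * m) ^ r := by
    by_contra h
    have : r * (2 * n * m) ^ r ≤ r * ((v + r) / r) := Nat.mul_le_mul_left _ (by omega)
    omega
  have hi' : (v + r) % r = r - 1 := by omega
  rw [hi'] at hb h0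
  generalize (v + r) / r = c at *
  have hD := base_pos n m
  generalize 2 * n * m = D at *
  have hP : 0 < D ^ (r - 1) := by positivity
  obtain ⟨e, rfl⟩ := hb
  rw [Nat.mul_div_cancel_left _ hP] at h0
  have : D ^ r = D ^ (r - 1) * D := by rw [← pow_succ]; congr 1; omega
  rw [this] at hc2
  have he : e < D := Nat.lt_of_mul_lt_mul_left hc2
  rw [Nat.mod_eq_of_lt he] at h0
  subst h0; simp at hc1

/-- overflow at `uend` -/
lemma overflow_end (hr : 2 ≤ r) (v : ℕ) (hv : v + r = uend r n m) :
    Moved (bb r n m (v + r)) (yy r n m v) ∧ tag (xx r n m (v + r)) = 0 ∧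
      (v + r) % r + 1 = r := by
  have hD := base_pos n m
  have hc : (v + r) / r = (2 * n * m) ^ r := by
    rw [hv, uend, Nat.mul_add_div (by omega), Nat.div_eq_of_lt (by omega), add_zero]
  have hi : (v + r) % r = r - 1 := by
    rw [hv, uend, Nat.mul_add_mod, Nat.mod_eq_of_lt (by omega)]
  have hpow : (2 * n * m) ^ r = (2 * n * m) ^ (r - 1) * (2 * n * m) := by
    rw [← pow_succ]; congr 1; omega
  have hb : bb r n m (v + r) = true := by
    simp only [bb, decide_eq_true_eq, hc, hi]
    exact ⟨_, hpow⟩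
  have hd : dg r n m (v + r) = 0 := by
    simp only [dg, hc, hi]
    rw [hpow, Nat.mul_div_cancel_left _ (by positivity)]; simp
  have hxy := (xy_zero r n m (v + r)).mpr hd
  refine ⟨?_, hxy.1, by omega⟩
  by_contra hM
  have := (old_stp r n m hr v).2.2.2 hM
  rw [hxy.2, hb] at this
  simp at this

lemma start_tok (u : ℕ) (hu : u < r) :
    (xx r n m u).val = 0 ∧ (yy r n m u).val = 0 ∧ bb r n m u = true := by
  have h : u / r = 0 := Nat.div_eq_of_lt hu
  simp [xx, yy, bb, dg, h]

end seq

section game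
variable {r n m : ℕ}

lemma PH_mono {p q : Finset (VA r n × VB r m)} (h : PartialHom (GA r n) (GB r m) p)
    (hq : q ⊆ p) : PartialHom (GA r n) (GB r m) q :=
  ⟨fun _ _ _ h1 h2 => h.1 (hq h1) (hq h2), fun _ _ h1 => h.2.1 (hq h1),
    fun _ _ _ _ h1 h2 => h.2.2 (hq h1) (hq h2)⟩

/-- normal form of color-preserving pairs -/
lemma nf {e : VA r n × VB r m} (h : (GB r m).color e.2 = (GA r n).color e.1) :
    (∃ a w, e = (Sum.inl a, Sum.inl w)) ∨
    (∃ v x c, e = (Sum.inr (v, x), Sum.inr (v, tag x, c))) := by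
  rcases e with ⟨a | ⟨v, x⟩, w | ⟨v', t, c⟩⟩
  · exact Or.inl ⟨_, _, rfl⟩
  · simp [GA, GB] at h
  · simp [GA, GB] at h
  · simp only [GA, GB, Option.some.injEq, Prod.mk.injEq] at h
    obtain ⟨rfl, rfl⟩ := h
    exact Or.inr ⟨_, _, _, rfl⟩

lemma insert_hom [DecidableEq (VA r n × VB r m)] {g : Finset (VA r n × VB r m)}
    (hg : PartialHom (GA r n) (GB r m) g)
    {x : VA r n} {y : VB r m} (hx : ∀ e ∈ g, e.1 ≠ x)
    (hc : (GB r m).color y = (GA r n).color x)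
    (h1 : ∀ e ∈ g, EA e.1 x → EB e.2 y) (h2 : ∀ e ∈ g, EA x e.1 → EB y e.2) :
    PartialHom (GA r n) (GB r m) (insert (x, y) g) := by
  refine ⟨?_, ?_, ?_⟩
  · intro a b b' hb hb'
    rw [Finset.mem_insert] at hb hb'
    rcases hb with hb | hb <;> rcases hb' with hb' | hb'
    · cases hb; cases hb'; rfl
    · cases hb; exact absurd rfl (hx _ hb')
    · cases hb'; exact absurd rfl (hx _ hb)
    · exact hg.1 hb hb'
  · intro a b hb
    rw [Finset.mem_insert] at hb
    rcases hb with hb | hb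
    · cases hb; exact hc
    · exact hg.2.1 hb
  · intro a b a' b' hb hb' hadj
    rw [Finset.mem_insert] at hb hb'
    rcases hb with hb | hb <;> rcases hb' with hb' | hb'
    · cases hb; cases hb'; exact absurd hadj (SimpleGraph.irrefl _)
    · cases hb
      rcases hadj with h | h
      · exact Or.inl (h2 _ hb' h)
      · exact Or.inr (h1 _ hb' h)
    · cases hb'
      rcases hadj with h | h
      · exact Or.inl (h1 _ hb h)
      · exact Or.inr (h2 _ hb h)
    · exact hg.2.2 hb hb' hadj

/-- constraints extracted from a partial homomorphism -/
lemma hom_rel {g : Finset (VA r n × VB r m)} (hg : PartialHom (GA r n) (GB r m) g)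
    {v u : ZMod (3 * r)} {x z : Fin (2 * n)} {t' t : Fin 3} {a b : Val r m}
    (h1 : (Sum.inr (v, x), Sum.inr (v, t', a)) ∈ g)
    (h2 : (Sum.inr (u, z), Sum.inr (u, t, b)) ∈ g)
    (j : Fin r) (hj : u = v + ((j.val + 1 : ℕ) : ZMod (3 * r)))
    (hs : j.val + 1 = r → Stp x z) : CX j u t' t a b := by
  have hadj : (GA r n).graph.Adj (Sum.inr (v, x)) (Sum.inr (u, z)) := Or.inl ⟨j, hj, hs⟩
  have hj' := j.isLt
  rcases hg.2.2 h1 h2 hadj with h | h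
  · obtain ⟨i, hi, hC⟩ := h
    have hi' := i.isLt
    have : i = j := by
      have := dist_unique (by omega) (by omega) hi hj
      exact Fin.ext (by omega)
    exact this ▸ hC
  · obtain ⟨i, hi, -⟩ := h
    have hi' := i.isLt
    exact (no_two (by omega) (by omega) hj hi).elim

lemma hom_relW {g : Finset (VA r n × VB r m)} (hg : PartialHom (GA r n) (GB r m) g)
    {u : ZMod (3 * r)} {z : Fin (2 * n)} {t : Fin 3} {b : Val r m} {a w : Fin (r + 1)}
    (h1 : (Sum.inl a, Sum.inl w) ∈ g)
    (h2 : (Sum.inr (u, z), Sum.inr (u, t, b)) ∈ g) : CW w u t b := by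
  rcases hg.2.2 h1 h2 (Or.inl trivial) with h | h
  · exact h
  · exact h.elim

/-- pigeonhole: if every index is covered then every element covers -/
lemma cover_all {α : Type} [DecidableEq α] {g : Finset α} (hg : g.card ≤ r)
    (Cov : Fin r → α → Prop)
    (huniq : ∀ j j' e, Cov j e → Cov j' e → j = j')
    (hcov : ∀ j, ∃ e ∈ g, Cov j e) : g.card = r ∧ ∀ e ∈ g, ∃ j, Cov j e := by
  choose f hf hC using hcov
  have hinj : Function.Injective f := fun i j h => huniq _ _ _ (hC i) (h ▸ hC j)
  have hsub : Finset.univ.image f ⊆ g := by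
    intro e he
    obtain ⟨j, -, rfl⟩ := Finset.mem_image.mp he
    exact hf j
  have hcard : (Finset.univ.image f).card = r := by
    rw [Finset.card_image_of_injective _ hinj]; simp
  have heq := Finset.eq_of_subset_of_card_le hsub (by omega)
  refine ⟨by rw [← heq, hcard], fun e he => ?_⟩
  rw [← heq] at he
  obtain ⟨j, -, rfl⟩ := Finset.mem_image.mp he
  exact ⟨j, hC j⟩

/-- pigeonhole: a non-forbidden value exists -/
lemma exists_free {α : Type} {g : Finset α} (hg : g.card ≤ r)
    (Forb : α → Fin (r + 1) → Prop)
    (huniq : ∀ e w w', Forb e w → Forb e w' → w = w') :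
    ∃ w, ∀ e ∈ g, ¬ Forb e w := by
  by_contra h
  push Not at h
  choose f hf hF using h
  have : (Finset.univ : Finset (Fin (r + 1))).card ≤ g.card :=
    Finset.card_le_card_of_injOn f (fun w _ => hf w)
      (fun w _ w' _ hw => huniq _ _ _ (hF w) (hw ▸ hF w'))
  simp at this
  omega

/-- `e` is a real token of class `v` -/
def RealAt (v : ZMod (3 * r)) (e : VA r n × VB r m) : Prop :=
  ∃ x t a, e = (Sum.inr (v, x), Sum.inr (v, t, Sum.inl a))

lemma RealAt.unique {v v' : ZMod (3 * r)} {e : VA r n × VB r m} (h : RealAt v e)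
    (h' : RealAt v' e) : v = v' := by
  obtain ⟨x, t, a, rfl⟩ := h
  obtain ⟨x', t', a', h⟩ := h'
  simp only [Prod.mk.injEq, Sum.inr.injEq] at h
  exact h.1.1

/-- `r` real tokens filling the window before class `u` -/
def IsState (q : Finset (VA r n × VB r m)) : Prop :=
  q.card = r ∧ ∃ u : ZMod (3 * r), ∀ j : Fin r, ∃ e ∈ q, ∃ v, RealAt v e ∧
    u = v + ((j.val + 1 : ℕ) : ZMod (3 * r))

lemma winUniq (u : ZMod (3 * r)) (j j' : Fin r) (e : VA r n × VB r m)
    (h : ∃ v, RealAt v e ∧ u = v + ((j.val + 1 : ℕ) : ZMod (3 * r)))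
    (h' : ∃ v, RealAt v e ∧ u = v + ((j'.val + 1 : ℕ) : ZMod (3 * r))) : j = j' := by
  obtain ⟨v, hv, h⟩ := h
  obtain ⟨v', hv', h'⟩ := h'
  have hj := j.isLt
  have hj' := j'.isLt
  rw [← hv.unique hv'] at h'
  have := dist_unique (by omega) (by omega) h h'
  exact Fin.ext (by omega)

variable (r n m) [NeZero n] [NeZero m]

/-- the `j`-th state of the run -/
def P [DecidableEq (VA r n × VB r m)] (j : ℕ) : Finset (VA r n × VB r m) :=
  (Finset.range r).image (fun i => T r n m (j + i))

variable [DecidableEq (VA r n × VB r m)]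

lemma T_real (u : ℕ) : RealAt (u : ZMod (3 * r)) (T r n m u) := ⟨_, _, _, rfl⟩

lemma T_cast {u v : ℕ} (h : T r n m u = T r n m v) : (u : ZMod (3 * r)) = v :=
  (T_real r n m u).unique (h ▸ T_real r n m v)

lemma mem_P {j : ℕ} {e} : e ∈ P r n m j ↔ ∃ i < r, e = T r n m (j + i) := by
  simp only [P, Finset.mem_image, Finset.mem_range]
  exact ⟨fun ⟨i, h, h'⟩ => ⟨i, h, h'.symm⟩, fun ⟨i, h, h'⟩ => ⟨i, h, h'.symm⟩⟩

lemma card_P (j : ℕ) : (P r n m j).card = r := by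
  rw [P, Finset.card_image_of_injOn, Finset.card_range]
  intro a ha b hb h
  simp only [Finset.coe_range, Set.mem_Iio] at ha hb
  have := T_cast r n m h
  push_cast at this
  exact cast_inj (by omega) (by omega) (add_left_cancel this)

lemma P_ne (hr : 2 ≤ r) (j : ℕ) : P r n m j ≠ P r n m (j + 1) := by
  intro h
  have h0 : T r n m j ∈ P r n m j := (mem_P r n m).mpr ⟨0, by omega, rfl⟩
  rw [h, mem_P] at h0
  obtain ⟨i, hi, h0⟩ := h0
  have := T_cast r n m h0
  push_cast at this
  have h2 : ((1 + i : ℕ) : ZMod (3 * r)) = 0 := by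
    push_cast
    rw [add_assoc] at this
    exact left_eq_add.mp this
  exact cast_ne_zero (by omega) (by omega) h2

/-- tokens of the run are compatible -/
lemma T_rel (hr : 2 ≤ r) {v u : ℕ} (hvu : v < u) (hu : u ≤ v + r) (hend : u < uend r n m) :
    (EA (T r n m v).1 (T r n m u).1 → EB (T r n m v).2 (T r n m u).2) ∧
    ¬ EA (T r n m u).1 (T r n m v).1 := by
  constructor
  · rintro ⟨j, hj, -⟩
    have hjl := j.isLt
    refine ⟨j, hj, ?_⟩
    have hd : j.val + 1 = u - v := by
      have h2 : (u : ZMod (3 * r)) = v + ((u - v : ℕ) : ZMod (3 * r)) := by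
        rw [← Nat.cast_add]; congr 1; omega
      exact dist_unique (by omega) (by omega) hj h2
    refine ⟨fun h0 => ?_, fun h0 => ?_⟩
    · obtain rfl : u = v + 1 := by omega
      exact pred_rel r n m hr v
    · obtain rfl : u = v + r := by omega
      obtain ⟨h1, h2, h3, h4⟩ := old_stp r n m hr v
      refine ⟨h2, fun hM => ⟨h3 hM, ?_⟩, h4⟩
      rw [cls_mod]
      exact fun h => no_overflow r n m hr v hend hM h.1 h.2
  · rintro ⟨j, hj, -⟩
    have hjl := j.isLt
    have h2 : (u : ZMod (3 * r)) = v + ((u - v : ℕ) : ZMod (3 * r)) := by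
      rw [← Nat.cast_add]; congr 1; omega
    exact no_two (by omega) (by omega) h2 hj

lemma T_color (u : ℕ) : (GB r m).color (T r n m u).2 = (GA r n).color (T r n m u).1 := rfl

lemma P_hom (hr : 2 ≤ r) (j : ℕ) (hj : j + r ≤ uend r n m) :
    PartialHom (GA r n) (GB r m) (P r n m j) := by
  refine ⟨?_, ?_, ?_⟩
  · intro x y y' h h'
    obtain ⟨i, hi, h⟩ := (mem_P r n m).mp h
    obtain ⟨i', hi', h'⟩ := (mem_P r n m).mp h'
    have hx : (T r n m (j + i)).1 = (T r n m (j + i')).1 := by rw [← h, ← h']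
    simp only [T, Sum.inr.injEq, Prod.mk.injEq] at hx
    have := hx.1
    push_cast at this
    have := cast_inj (by omega) (by omega) (add_left_cancel this)
    subst this
    rw [← h', Prod.mk.injEq] at h
    exact h.2
  · intro x y h
    obtain ⟨i, hi, h⟩ := (mem_P r n m).mp h
    have := T_color r n m (j + i)
    rw [← h] at this
    exact this
  · intro x y x' y' h h' hadj
    obtain ⟨i, hi, h⟩ := (mem_P r n m).mp h
    obtain ⟨i', hi', h'⟩ := (mem_P r n m).mp h'
    have e1 : x = (T r n m (j + i)).1 := by rw [← h]
    have e2 : y = (T r n m (j + i)).2 := by rw [← h]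
    have e3 : x' = (T r n m (j + i')).1 := by rw [← h']
    have e4 : y' = (T r n m (j + i')).2 := by rw [← h']
    subst e1 e2 e3 e4
    rcases lt_trichotomy i i' with hlt | heq | hlt
    · obtain ⟨h1, h2⟩ := T_rel r n m hr (v := j + i) (u := j + i') (by omega) (by omega) (by omega)
      rcases hadj with hadj | hadj
      · exact Or.inl (h1 hadj)
      · exact absurd hadj h2
    · subst heq
      exact absurd hadj (SimpleGraph.irrefl _)
    · obtain ⟨h1, h2⟩ := T_rel r n m hr (v := j + i') (u := j + i) (by omega) (by omega) (by omega)
      rcases hadj with hadj | hadj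
      · exact absurd hadj h2
      · exact Or.inr (h1 hadj)

/-- states contained in `P j` together with the next token -/
lemma states_step (hr : 2 ≤ r) (j : ℕ) {q : Finset (VA r n × VB r m)}
    (hq : q ⊆ insert (T r n m (j + r)) (P r n m j)) (hs : IsState q) :
    q = P r n m j ∨ q = P r n m (j + 1) := by
  obtain ⟨hc, u, hu⟩ := hs
  have hall := (cover_all (le_of_eq hc) _ (winUniq u) hu).2
  by_cases hT : T r n m (j + r) ∈ q
  · right
    obtain ⟨a, v, hv, ha⟩ := hall _ hT
    have hal := a.isLt
    obtain rfl := hv.unique (T_real r n m _)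
    have hT0 : T r n m j ∉ q := by
      intro h0
      obtain ⟨b, v, hv, hb⟩ := hall _ h0
      have hbl := b.isLt
      obtain rfl := hv.unique (T_real r n m _)
      rw [ha] at hb
      push_cast at hb
      rw [add_assoc] at hb
      have := add_left_cancel hb
      have := cast_inj (r := r) (a := r + (a + 1)) (b := b + 1) (by omega) (by omega)
        (by push_cast; exact this)
      omega
    apply Finset.eq_of_subset_of_card_le
    · intro e he
      rw [mem_P]
      rcases Finset.mem_insert.mp (hq he) with h | h
      · exact ⟨r - 1, by omega, by rw [h]; congr 1; omega⟩
      · obtain ⟨i, hi, rfl⟩ := (mem_P r n m).mp h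
        have : i ≠ 0 := by rintro rfl; exact hT0 he
        exact ⟨i - 1, by omega, by congr 1; omega⟩
    · rw [card_P, hc]
  · left
    apply Finset.eq_of_subset_of_card_le
    · intro e he
      rcases Finset.mem_insert.mp (hq he) with h | h
      · exact absurd (h ▸ he) hT
      · exact h
    · rw [card_P, hc]

/-- the critical strategies -/
def H (i : ℕ) : Set (Finset (VA r n × VB r m)) :=
  {g | PartialHom (GA r n) (GB r m) g ∧ g.card ≤ r + 1 ∧
    ∀ q ⊆ g, IsState q → ∃ j ≤ i, q = P r n m j}

lemma P_mem_H (hr : 2 ≤ r) {i j : ℕ} (hij : j ≤ i) (hj : j + r ≤ uend r n m) :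
    P r n m j ∈ H r n m i := by
  refine ⟨P_hom r n m hr j hj, by rw [card_P]; omega, fun q hq hs => ⟨j, hij, ?_⟩⟩
  exact Finset.eq_of_subset_of_card_le hq (by rw [card_P, hs.1])

/-- adding a non-real pair creates no state -/
lemma states_harmless {i : ℕ} {g : Finset (VA r n × VB r m)} (hg : g ∈ H r n m i)
    (hc : g.card < r + 1) {e : VA r n × VB r m} (he : ∀ v, ¬ RealAt v e)
    (hom : PartialHom (GA r n) (GB r m) (insert e g)) : insert e g ∈ H r n m i := by
  refine ⟨hom, (Finset.card_insert_le _ _).trans (by omega), fun q hq hs => hg.2.2 q ?_ hs⟩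
  obtain ⟨hcard, u, hu⟩ := hs
  have hall := (cover_all (le_of_eq hcard) _ (winUniq u) hu).2
  intro f hf
  rcases Finset.mem_insert.mp (hq hf) with h | h
  · obtain ⟨_, v, hv, _⟩ := hall _ hf
    exact absurd (h ▸ hv) (he v)
  · exact h

end game

section extend
variable (r n m : ℕ) [NeZero n] [NeZero m] [DecidableEq (VA r n × VB r m)]

/-- extension on a pigeon vertex -/
lemma extend_W {i : ℕ} {g : Finset (VA r n × VB r m)} (hg : g ∈ H r n m i)
    (hc : g.card < r + 1) (a : Fin (r + 1)) (hx : ∀ e ∈ g, e.1 ≠ Sum.inl a) :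
    ∃ b, insert (Sum.inl a, b) g ∈ H r n m i := by
  obtain ⟨w, hw⟩ := exists_free (g := g) (by omega)
    (fun e w => match e.2 with
      | Sum.inl w' => w' = w
      | Sum.inr (u, t, c) => ¬ CW w u t c)
    (by
      rintro ⟨e1, w' | ⟨u, t, (⟨y, b⟩ | ⟨J, j'⟩)⟩⟩ w₁ w₂ h1 h2
      · exact h1.symm.trans h2
      · simp only [CW, Classical.not_imp] at h1 h2
        exact Fin.ext (h1.1.trans h2.1.symm)
      · simp only [CW, Classical.not_imp, not_not] at h1 h2
        exact Fin.ext (by omega))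
  refine ⟨Sum.inl w, states_harmless r n m hg hc ?_ (insert_hom hg.1 hx rfl ?_ ?_)⟩
  · rintro v ⟨x, t, c, h⟩
    simp at h
  · intro e he hE
    rcases nf (hg.1.2.1 he : (GB r m).color e.2 = (GA r n).color e.1) with
      ⟨a', w', rfl⟩ | ⟨v, x, c, rfl⟩
    · exact hw _ he
    · exact hE.elim
  · intro e he hE
    rcases nf (hg.1.2.1 he : (GB r m).color e.2 = (GA r n).color e.1) with
      ⟨a', w', rfl⟩ | ⟨v, x, c, rfl⟩
    · exact fun h => hw _ he h.symm
    · exact not_not.mp (hw _ he)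

/-- `e` covers index `j` of the run window of `(u, z)` -/
def CovJ (u : ZMod (3 * r)) (z : Fin (2 * n)) (j : Fin r) (e : VA r n × VB r m) : Prop :=
  ∃ v x t a, e = (Sum.inr (v, x), Sum.inr (v, t, Sum.inl a)) ∧
    u = v + ((j.val + 1 : ℕ) : ZMod (3 * r)) ∧ (j.val + 1 = r → Stp x z)

/-- `e` covers index `j` of the start window of `(u, z)` -/
def CovS (u : ZMod (3 * r)) (z : Fin (2 * n)) (j : Fin r) (e : VA r n × VB r m) : Prop :=
  u.val < r ∧ tag z = 0 ∧ ((∃ a w, e = (Sum.inl a, Sum.inl w) ∧ j.val + 1 = u.val + w.val) ∨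
    (∃ v, RealAt v e ∧ u = v + ((j.val + 1 : ℕ) : ZMod (3 * r)) ∧ j.val + 1 ≤ u.val))

lemma CovJ_uniq (u : ZMod (3 * r)) (z : Fin (2 * n)) (j j' : Fin r) (e : VA r n × VB r m)
    (h : CovJ r n m u z j e) (h' : CovJ r n m u z j' e) : j = j' := by
  obtain ⟨v, x, t, a, h1, h2, -⟩ := h
  obtain ⟨v', x', t', a', h1', h2', -⟩ := h'
  exact winUniq u j j' e ⟨v, ⟨_, _, _, h1⟩, h2⟩ ⟨v', ⟨_, _, _, h1'⟩, h2'⟩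

lemma CovS_uniq (u : ZMod (3 * r)) (z : Fin (2 * n)) (j j' : Fin r) (e : VA r n × VB r m)
    (h : CovS r n m u z j e) (h' : CovS r n m u z j' e) : j = j' := by
  obtain ⟨-, -, ⟨a, w, rfl, h⟩ | ⟨v, hv, h, -⟩⟩ := h <;>
    obtain ⟨-, -, ⟨a', w', h1', h'⟩ | ⟨v', hv', h', -⟩⟩ := h'
  · simp only [Prod.mk.injEq, Sum.inl.injEq] at h1'
    obtain ⟨-, rfl⟩ := h1'
    exact Fin.ext (by omega)
  · obtain ⟨_, _, _, h⟩ := hv'; simp at h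
  · obtain ⟨_, _, _, h⟩ := hv; rw [h1'] at h; simp at h
  · exact winUniq u j j' e ⟨v, hv, h⟩ ⟨v', hv', h'⟩

/-- a harmless answer -/
lemma extend_harm {i : ℕ} {g : Finset (VA r n × VB r m)} (hg : g ∈ H r n m i)
    (hc : g.card < r + 1) (u : ZMod (3 * r)) (z : Fin (2 * n))
    (hx : ∀ e ∈ g, e.1 ≠ Sum.inr (u, z)) (J : Fin r ⊕ Bool) (j' : Fin r)
    (hS : ∀ e ∈ g, ¬ CovS r n m u z j' e)
    (hJ : ∀ j, J = Sum.inl j → ∀ e ∈ g, ¬ CovJ r n m u z j e)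
    (hM : ∀ β, J = Sum.inr β → ∀ v x y b, (Sum.inr (v, x), Sum.inr (v, tag x, Sum.inl (y, b))) ∈ g →
      ∀ j : Fin r, u = v + ((j.val + 1 : ℕ) : ZMod (3 * r)) → (j.val + 1 = r → Stp x z) →
        (j.val = 0 → (β = true ↔ Cin u (tag x) y b)) ∧
        (j.val + 1 = r → ¬ (Moved β y ↔ tag z ≠ tag x))) :
    ∃ b, insert (Sum.inr (u, z), b) g ∈ H r n m i := by
  refine ⟨Sum.inr (u, tag z, Sum.inr (J, j')),
    states_harmless r n m hg hc ?_ (insert_hom hg.1 hx rfl ?_ ?_)⟩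
  · rintro v ⟨x, t, c, h⟩
    simp at h
  · intro e he hE
    rcases nf (hg.1.2.1 he : (GB r m).color e.2 = (GA r n).color e.1) with
      ⟨a', w', rfl⟩ | ⟨v, x, c, rfl⟩
    · intro hst heq
      exact hS _ he ⟨hst.1, hst.2, Or.inl ⟨_, _, rfl, heq⟩⟩
    · obtain ⟨j, hj, hs⟩ := hE
      refine ⟨j, hj, ?_⟩
      rcases c with ⟨y, b⟩ | c
      · refine ⟨fun h => hJ j h _ he ⟨_, _, _, _, rfl, hj, hs⟩,
          fun β hβ => hM β hβ v x y b he j hj hs, fun hst hle heq => ?_⟩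
        subst heq
        exact hS _ he ⟨hst.1, hst.2, Or.inr ⟨v, ⟨_, _, _, rfl⟩, hj, hle⟩⟩
      · trivial
  · intro e he hE
    rcases nf (hg.1.2.1 he : (GB r m).color e.2 = (GA r n).color e.1) with
      ⟨a', w', rfl⟩ | ⟨v, x, c, rfl⟩
    · exact hE.elim
    · obtain ⟨j, hj, hs⟩ := hE
      exact ⟨j, hj, trivial⟩

lemma val_small (hr : 2 ≤ r) {u v : ZMod (3 * r)} (hu : u.val < r) (hv : v.val < r) {j : Fin r}
    (h : u = v + ((j.val + 1 : ℕ) : ZMod (3 * r))) : j.val + 1 ≠ r := by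
  intro hj
  haveI : NeZero (3 * r) := ⟨by omega⟩
  rw [hj] at h
  have h1 : ((u.val : ℕ) : ZMod (3 * r)) = ((v.val + r : ℕ) : ZMod (3 * r)) := by
    push_cast
    rw [ZMod.natCast_zmod_val, ZMod.natCast_zmod_val]
    exact h
  have := cast_inj (by omega) (by omega) h1
  omega

/-- the answer when the start window is full -/
lemma extend_start (hr : 2 ≤ r) {i : ℕ} {g : Finset (VA r n × VB r m)} (hg : g ∈ H r n m i)
    (hc : g.card < r + 1) (u : ZMod (3 * r)) (z : Fin (2 * n))
    (hx : ∀ e ∈ g, e.1 ≠ Sum.inr (u, z))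
    (hS : ∀ j', ∃ e ∈ g, CovS r n m u z j' e) :
    ∃ b, insert (Sum.inr (u, z), b) g ∈ H r n m i := by
  haveI : NeZero (3 * r) := ⟨by omega⟩
  obtain ⟨hcard, hall⟩ := cover_all (by omega) _ (CovS_uniq r n m u z) hS
  obtain ⟨-, -, hu, hz, -⟩ := hS ⟨0, by omega⟩
  -- the special pigeon value is on the board
  obtain ⟨a, w, hw, hw1⟩ : ∃ a w, (Sum.inl a, Sum.inl w) ∈ g ∧ w.val = 1 := by
    obtain ⟨e, he, -, -, ⟨a, w, rfl, h⟩ | ⟨v, hv, h, hle⟩⟩ := hS ⟨u.val, hu⟩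
    · exact ⟨a, w, he, by simp only at h; omega⟩
    · simp only at hle; omega
  have legit : ∀ v x t y b, (Sum.inr (v, x), Sum.inr (v, t, Sum.inl (y, b))) ∈ g →
      v.val < r ∧ t = 0 ∧ y.val = 0 ∧ b = true := by
    intro v x t y b h
    exact hom_relW hg.1 hw h hw1
  have hm : 0 < m := NeZero.pos m
  have hom : PartialHom (GA r n) (GB r m)
      (insert (Sum.inr (u, z), Sum.inr (u, tag z, Sum.inl (⟨0, hm⟩, true))) g) := by
    refine insert_hom hg.1 hx rfl ?_ ?_
    · intro e he hE
      rcases nf (hg.1.2.1 he : (GB r m).color e.2 = (GA r n).color e.1) with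
        ⟨a', w', rfl⟩ | ⟨v, x, c, rfl⟩
      · exact fun _ => ⟨hu, hz, rfl, rfl⟩
      · obtain ⟨j, hj, hs⟩ := hE
        refine ⟨j, hj, ?_⟩
        rcases c with ⟨y, b⟩ | c
        · obtain ⟨h1, h2, h3, h4⟩ := legit _ _ _ _ _ he
          exact ⟨fun _ => ⟨fun _ => Or.inr ⟨h4, h2, h3⟩, fun _ => rfl⟩,
            fun h => absurd h (val_small r hr hu h1 hj)⟩
        · trivial
    · intro e he hE
      rcases nf (hg.1.2.1 he : (GB r m).color e.2 = (GA r n).color e.1) with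
        ⟨a', w', rfl⟩ | ⟨v, x, c, rfl⟩
      · exact hE.elim
      · obtain ⟨j, hj, hs⟩ := hE
        refine ⟨j, hj, ?_⟩
        rcases c with ⟨y, b⟩ | c
        · obtain ⟨h1, h2, h3, h4⟩ := legit _ _ _ _ _ he
          exact ⟨fun _ => ⟨fun _ => Or.inr ⟨rfl, hz, rfl⟩, fun _ => h4⟩,
            fun h => absurd h (val_small r hr h1 hu hj)⟩
        · obtain ⟨_, -, -, ⟨_, _, h, -⟩ | ⟨_, ⟨_, _, _, h⟩, -⟩⟩ := hall _ he
          · simp at h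
          · simp at h
  refine ⟨_, hom, (Finset.card_insert_le _ _).trans (by omega), fun q hq hs => ⟨0, by omega, ?_⟩⟩
  obtain ⟨hqc, u', hu'⟩ := hs
  have hqall := (cover_all (le_of_eq hqc) _ (winUniq u') hu').2
  apply Finset.eq_of_subset_of_card_le
  · intro e he
    obtain ⟨_, v, ⟨x, t, ⟨y, b⟩, rfl⟩, -⟩ := hqall _ he
    have hmem := hq he
    have hnw : v.val < r ∧ t = 0 ∧ y.val = 0 ∧ b = true := by
      exact hom_relW hom (Finset.mem_insert_of_mem hw) hmem hw1
    obtain ⟨h1, rfl, h3, rfl⟩ := hnw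
    have hcol := hom.2.1 hmem
    simp only [GA, GB, Option.some.injEq, Prod.mk.injEq, true_and] at hcol
    have hx0 := tag_zero.mp hcol.symm
    obtain ⟨s1, s2, s3⟩ := start_tok r n m v.val h1
    rw [mem_P]
    refine ⟨v.val, h1, ?_⟩
    have e1 : xx r n m v.val = x := Fin.ext (s1.trans hx0.symm)
    have e2 : yy r n m v.val = y := Fin.ext (s2.trans h3.symm)
    rw [zero_add, T, e1, e2, s3, ZMod.natCast_zmod_val, hcol]
  · rw [card_P, hqc]

/-- the answer when the run window is full -/
lemma extend_run (hr : 2 ≤ r) {i j₀ : ℕ} (hi : i + r ≤ uend r n m) (hj₀ : j₀ < i)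
    (hg : P r n m j₀ ∈ H r n m i) (u : ZMod (3 * r)) (z : Fin (2 * n))
    (hx : ∀ e ∈ P r n m j₀, e.1 ≠ Sum.inr (u, z))
    (j' : Fin r) (hS : ∀ e ∈ P r n m j₀, ¬ CovS r n m u z j' e)
    (hJ : ∀ j, ∃ e ∈ P r n m j₀, CovJ r n m u z j e) :
    ∃ b, insert (Sum.inr (u, z), b) (P r n m j₀) ∈ H r n m i := by
  obtain ⟨-, hall⟩ := cover_all (by rw [card_P]) _ (CovJ_uniq r n m u z) hJ
  have hmem : ∀ a < r, T r n m (j₀ + a) ∈ P r n m j₀ := fun a ha => (mem_P r n m).mpr ⟨a, ha, rfl⟩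
  have hTe : ∀ a < r, ∃ j : Fin r, u = ((j₀ + a : ℕ) : ZMod (3 * r)) + ((j.val + 1 : ℕ) : ZMod (3 * r))
      ∧ (j.val + 1 = r → Stp (xx r n m (j₀ + a)) z) := by
    intro a ha
    obtain ⟨j, v, x, t, c, h1, h2, h3⟩ := hall _ (hmem a ha)
    simp only [T, Prod.mk.injEq, Sum.inr.injEq] at h1
    obtain ⟨⟨rfl, rfl⟩, -⟩ := h1
    exact ⟨j, h2, h3⟩
  -- the class of the new vertex
  obtain ⟨hu, hstp⟩ : u = ((j₀ + r : ℕ) : ZMod (3 * r)) ∧ Stp (xx r n m j₀) z := by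
    obtain ⟨a, ha, has⟩ := hTe 0 (by omega)
    obtain ⟨b, hb, -⟩ := hTe (r - 1) (by omega)
    have hal := a.isLt
    have hbl := b.isLt
    have hh : a.val + 1 = (r - 1) + (b.val + 1) := by
      apply dist_unique (u := u) (v := (j₀ : ZMod (3 * r))) (by omega) (by omega)
      · simpa using ha
      · rw [hb]; push_cast; ring
    have har : a.val + 1 = r := by omega
    refine ⟨?_, by simpa using has har⟩
    rw [ha, har]; push_cast; ring
  subst hu
  obtain ⟨o1, o2, o3, o4⟩ := old_stp r n m hr j₀
  by_cases hz : z = xx r n m (j₀ + r)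
  · subst hz
    refine ⟨(T r n m (j₀ + r)).2, ?_, ?_, ?_⟩
    · refine insert_hom hg.1 hx rfl ?_ ?_
      · intro e he hE
        obtain ⟨a, ha, rfl⟩ := (mem_P r n m).mp he
        exact (T_rel r n m hr (v := j₀ + a) (u := j₀ + r) (by omega) (by omega) (by omega)).1 hE
      · intro e he hE
        obtain ⟨a, ha, rfl⟩ := (mem_P r n m).mp he
        exact absurd hE
          (T_rel r n m hr (v := j₀ + a) (u := j₀ + r) (by omega) (by omega) (by omega)).2
    · exact (Finset.card_insert_le _ _).trans (by rw [card_P])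
    · intro q hq hs
      rcases states_step r n m hr j₀ hq hs with h | h
      · exact ⟨j₀, by omega, h⟩
      · exact ⟨j₀ + 1, by omega, h⟩
  · refine extend_harm r n m hg (by rw [card_P]; omega) _ z hx (Sum.inr (bb r n m (j₀ + r))) j' hS
      (by simp) ?_
    intro β hβ v x y b he j hj hs
    obtain rfl : bb r n m (j₀ + r) = β := by simpa using hβ
    obtain ⟨a, ha, he⟩ := (mem_P r n m).mp he
    simp only [T, Prod.mk.injEq, Sum.inr.injEq, Sum.inl.injEq] at he
    obtain ⟨⟨rfl, rfl⟩, -, -, rfl, rfl⟩ := he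
    have hjl := j.isLt
    have hd : j.val + 1 = r - a := by
      apply dist_unique (u := ((j₀ + r : ℕ) : ZMod (3 * r))) (v := ((j₀ + a : ℕ) : ZMod (3 * r)))
        (by omega) (by omega) hj
      rw [← Nat.cast_add]; congr 1; omega
    refine ⟨fun h0 => ?_, fun h0 => ?_⟩
    · have := pred_rel r n m hr (j₀ + a)
      rw [show j₀ + a + 1 = j₀ + r by omega] at this
      exact this
    · obtain rfl : a = 0 := by omega
      simp only [add_zero]
      intro hiff
      exact hz (stp_unique hstp o1 (hiff.symm.trans o2))

lemma extend_all (hr : 2 ≤ r) {i : ℕ} (hi : i + r ≤ uend r n m)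
    {g : Finset (VA r n × VB r m)} (hg : g ∈ H r n m i) (hcrit : g ≠ P r n m i)
    (hc : g.card < r + 1) (x : VA r n) : ∃ b, insert (x, b) g ∈ H r n m i := by
  by_cases hx : ∀ e ∈ g, e.1 ≠ x
  swap
  · push Not at hx
    obtain ⟨e, he, rfl⟩ := hx
    exact ⟨e.2, by rw [Finset.insert_eq_of_mem (by exact he)]; exact hg⟩
  rcases x with a | ⟨u, z⟩
  · exact extend_W r n m hg hc a hx
  by_cases hS : ∀ j', ∃ e ∈ g, CovS r n m u z j' e
  · exact extend_start r n m hr hg hc u z hx hS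
  push Not at hS
  obtain ⟨j', hS⟩ := hS
  by_cases hJ : ∀ j, ∃ e ∈ g, CovJ r n m u z j e
  · obtain ⟨hcard, -⟩ := cover_all (by omega) _ (CovJ_uniq r n m u z) hJ
    have hst : IsState g := by
      refine ⟨hcard, u, fun j => ?_⟩
      obtain ⟨e, he, v, x, t, a, h1, h2, -⟩ := hJ j
      exact ⟨e, he, v, ⟨x, t, a, h1⟩, h2⟩
    obtain ⟨j₀, hj₀, rfl⟩ := hg.2.2 g (Finset.Subset.refl _) hst
    have : j₀ ≠ i := by rintro rfl; exact hcrit rfl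
    exact extend_run r n m hr hi (by omega) hg u z hx j' hS hJ
  · push Not at hJ
    obtain ⟨j, hJ⟩ := hJ
    exact extend_harm r n m hg hc u z hx (Sum.inl j) j' hS
      (fun k hk => by obtain rfl : j = k := by simpa using hk
                      exact hJ)
      (fun β hβ => by simp at hβ)

end extend

noncomputable instance instDecVA (r n : ℕ) : DecidableEq (VA r n) := Classical.decEq _
noncomputable instance instDecVB (r m : ℕ) : DecidableEq (VB r m) := Classical.decEq _

section spoiler
variable (r n m : ℕ) [NeZero n] [NeZero m]

lemma crit_strategy (hr : 2 ≤ r) {i : ℕ} (hi : i + r ≤ uend r n m) :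
    IsCriticalStrategy (GA r n) (GB r m) Set.univ Set.univ (r + 1) (H r n m i) {P r n m i} where
  nonempty := ⟨_, P_mem_H r n m hr le_rfl hi⟩
  crit_subset := by
    rintro p rfl
    exact P_mem_H r n m hr le_rfl hi
  mem_SD := fun _ _ _ _ => ⟨trivial, trivial⟩
  isHom := fun p hp => hp.1
  crit_card := by
    rintro p rfl
    rw [card_P]; omega
  downward := fun p hp q hq =>
    ⟨PH_mono hp.1 hq, (Finset.card_le_card hq).trans hp.2.1,
      fun q' hq' hs => hp.2.2 q' (hq'.trans hq) hs⟩
  extend := fun g hg hcrit hc x _ => by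
    obtain ⟨b, hb⟩ := extend_all r n m hr hi hg hcrit hc x
    exact ⟨b, trivial, hb⟩

abbrev SW (p : Finset (VA r n × VB r m)) : Prop :=
  SpoilerWins (GA r n) (GB r m) Set.univ Set.univ (r + 1) p

lemma SW_mono {p q : Finset (VA r n × VB r m)} (h : SW r n m p) (hpq : p ⊆ q) : SW r n m q := by
  cases h with
  | win h => exact SpoilerWins.win fun h' => h (PH_mono h' hpq)
  | move p' x h1 h2 h3 h4 => exact SpoilerWins.move p' x (h1.trans hpq) h2 h3 h4

lemma SW_move {p : Finset (VA r n × VB r m)} (hp : p.card ≤ r) (x : VA r n)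
    (h : ∀ b, PartialHom (GA r n) (GB r m) (insert (x, b) p) → SW r n m (insert (x, b) p)) :
    SW r n m p := by
  refine SpoilerWins.move p x (Finset.Subset.refl _) (by omega) trivial fun b _ => ?_
  by_cases hb : PartialHom (GA r n) (GB r m) (insert (x, b) p)
  · exact h b hb
  · exact SpoilerWins.win hb

lemma SW_run_step (hr : 2 ≤ r) (j : ℕ)
    (h : j + r ≠ uend r n m → SW r n m (P r n m (j + 1))) : SW r n m (P r n m j) := by
  refine SW_move r n m (by rw [card_P]) (T r n m (j + r)).1 fun b hb => ?_
  have hmem : ∀ a < r, T r n m (j + a) ∈ insert ((T r n m (j + r)).1, b) (P r n m j) :=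
    fun a ha => Finset.mem_insert_of_mem ((mem_P r n m).mpr ⟨a, ha, rfl⟩)
  obtain ⟨o1, o2, o3, o4⟩ := old_stp r n m hr j
  rcases nf (hb.2.1 (Finset.mem_insert_self _ _) :
      (GB r m).color ((T r n m (j + r)).1, b).2 = (GA r n).color ((T r n m (j + r)).1, b).1) with
    ⟨a', w', h1⟩ | ⟨v, x, c, h1⟩
  · simp [T] at h1
  simp only [T, Prod.mk.injEq, Sum.inr.injEq] at h1
  obtain ⟨⟨rfl, rfl⟩, rfl⟩ := h1
  have hnew := Finset.mem_insert_self ((T r n m (j + r)).1,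
    (Sum.inr (((j + r : ℕ) : ZMod (3 * r)), tag (xx r n m (j + r)), c) : VB r m)) (P r n m j)
  have rel : ∀ d (hd : d < r), CX ⟨d, hd⟩ ((j + r : ℕ) : ZMod (3 * r))
      (tag (xx r n m (j + (r - 1 - d)))) (tag (xx r n m (j + r)))
      (Sum.inl (yy r n m (j + (r - 1 - d)), bb r n m (j + (r - 1 - d)))) c := by
    intro d hd
    refine hom_rel hb (hmem (r - 1 - d) (by omega)) hnew ⟨d, hd⟩ ?_ ?_
    · rw [← Nat.cast_add]; congr 1; simp only; omega
    · intro h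
      simp only at h
      rw [show j + (r - 1 - d) = j by omega]
      exact o1
  have relP := rel 0 (by omega)
  have relO := rel (r - 1) (by omega)
  have hcin := pred_rel r n m hr (j + (r - 1))
  rw [show j + (r - 1) + 1 = j + r by omega] at hcin
  rw [show j + (r - 1 - 0) = j + (r - 1) by omega] at relP
  rw [show j + (r - 1 - (r - 1)) = j by omega] at relO
  rcases c with ⟨y, β⟩ | ⟨J, j'⟩
  · have hβ : β = bb r n m (j + r) := by
      have := (relP.1 rfl).trans hcin.symm
      exact Bool.eq_iff_iff.mpr this
    subst hβ
    obtain ⟨h1, h2, h3⟩ := relO.2 (by simp only; omega)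
    by_cases hend : j + r = uend r n m
    · exfalso
      obtain ⟨e1, e2, e3⟩ := overflow_end r n m hr j hend
      refine (h2 e1).2 ⟨e2, ?_⟩
      rw [cls_mod]; exact e3
    have hy : y = yy r n m (j + r) := by
      apply Fin.ext
      by_cases hM : Moved (bb r n m (j + r)) (yy r n m j)
      · rw [(h2 hM).1, o3 hM]
      · rw [h3 hM, o4 hM]
    subst hy
    refine SW_mono r n m (h hend) ?_
    intro e he
    obtain ⟨a, ha, rfl⟩ := (mem_P r n m).mp he
    rcases Nat.lt_or_ge (a + 1) r with h' | h'
    · rw [show j + 1 + a = j + (a + 1) by omega]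
      exact hmem _ h'
    · rw [show j + 1 + a = j + r by omega]
      exact Finset.mem_insert_self _ _
  · exfalso
    rcases J with d | β
    · exact (rel d.val d.isLt).1 rfl
    · have hβ : β = bb r n m (j + r) := by
        have := (((relP.2.1 β rfl).1 rfl)).trans hcin.symm
        exact Bool.eq_iff_iff.mpr this
      subst hβ
      exact (relO.2.1 _ rfl).2 (by simp only; omega) o2

lemma SW_run (hr : 2 ≤ r) : SW r n m (P r n m 0) := by
  have key : ∀ d j, j + r + d = uend r n m → SW r n m (P r n m j) := by
    intro d
    induction d with
    | zero => intro j hj; exact SW_run_step r n m hr j fun h => absurd (by omega) h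
    | succ d ih => intro j hj; exact SW_run_step r n m hr j fun _ => ih (j + 1) (by omega)
  refine key (uend r n m - r) 0 ?_
  have : r ≤ uend r n m := by
    unfold uend
    have : 0 < (2 * n * m) ^ r := pow_pos (base_pos n m) r
    have : r ≤ r * (2 * n * m) ^ r := Nat.le_mul_of_pos_right _ this
    omega
  omega

/-- the intermediate start positions -/
noncomputable def S (f : Fin (r + 1) → Fin (r + 1)) (i : ℕ) : Finset (VA r n × VB r m) :=
  (Finset.univ.filter fun a => 1 ≤ (f a).val ∧ (f a).val + i ≤ r).image
      (fun a => (Sum.inl a, Sum.inl (f a))) ∪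
    (Finset.range i).image (T r n m)

lemma mem_S {f : Fin (r + 1) → Fin (r + 1)} {i : ℕ} {e} : e ∈ S r n m f i ↔
    (∃ a, (1 ≤ (f a).val ∧ (f a).val + i ≤ r) ∧ (Sum.inl a, Sum.inl (f a)) = e) ∨
    ∃ i' < i, T r n m i' = e := by
  simp [S]

lemma card_S {f : Fin (r + 1) → Fin (r + 1)} (hf : Function.Injective f) {i : ℕ} (hi : i ≤ r) :
    (S r n m f i).card ≤ r := by
  have h1 : (Finset.univ.filter fun a => 1 ≤ (f a).val ∧ (f a).val + i ≤ r).card ≤ r - i := by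
    have := Finset.card_le_card_of_injOn (s := Finset.univ.filter
      fun a => 1 ≤ (f a).val ∧ (f a).val + i ≤ r) (t := Finset.Icc 1 (r - i))
      (fun a => (f a).val)
      (by intro a ha
          simp only [Finset.coe_filter, Finset.mem_univ, true_and, Set.mem_ofPred_eq] at ha
          simp only [Finset.coe_Icc, Set.mem_Icc]; omega)
      (by intro a _ b _ h; exact hf (Fin.ext h))
    simpa using this
  refine (Finset.card_union_le _ _).trans ?_
  refine (Nat.add_le_add Finset.card_image_le Finset.card_image_le).trans ?_
  rw [Finset.card_range]; omega

lemma SW_start (hr : 2 ≤ r) {f : Fin (r + 1) → Fin (r + 1)} (hf : Function.Injective f) :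
    SW r n m (S r n m f 0) := by
  have hsurj : Function.Surjective f := Finite.surjective_of_injective hf
  have key : ∀ d i, i + d = r → SW r n m (S r n m f i) := by
    intro d
    induction d with
    | zero =>
      intro i hi
      refine SW_mono r n m (SW_run r n m hr) fun e he => ?_
      obtain ⟨a, ha, rfl⟩ := (mem_P r n m).mp he
      exact (mem_S r n m).mpr (Or.inr ⟨a, by omega, by rw [zero_add]⟩)
    | succ d ih =>
      intro i hi
      have hir : i < r := by omega
      refine SW_move r n m (card_S r n m hf (by omega)) (T r n m i).1 fun b hb => ?_
      rcases nf (hb.2.1 (Finset.mem_insert_self _ _) :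
          (GB r m).color ((T r n m i).1, b).2 = (GA r n).color ((T r n m i).1, b).1) with
        ⟨a', w', h1⟩ | ⟨v, x, c, h1⟩
      · simp [T] at h1
      simp only [T, Prod.mk.injEq, Sum.inr.injEq] at h1
      obtain ⟨⟨rfl, rfl⟩, rfl⟩ := h1
      have hnew := Finset.mem_insert_self ((T r n m i).1,
        (Sum.inr ((i : ZMod (3 * r)), tag (xx r n m i), c) : VB r m)) (S r n m f i)
      have hval : (i : ZMod (3 * r)).val = i := by
        rw [ZMod.val_natCast, Nat.mod_eq_of_lt (by omega)]
      obtain ⟨s1, s2, s3⟩ := start_tok r n m i hir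
      have ht : tag (xx r n m i) = 0 := tag_zero.mpr s1
      have relW : ∀ w : Fin (r + 1), 1 ≤ w.val → w.val + i ≤ r →
          CW w (i : ZMod (3 * r)) (tag (xx r n m i)) c := by
        intro w h1 h2
        obtain ⟨a, rfl⟩ := hsurj w
        exact hom_relW hb (Finset.mem_insert_of_mem
          ((mem_S r n m).mpr (Or.inl ⟨a, ⟨h1, h2⟩, rfl⟩))) hnew
      rcases c with ⟨y, β⟩ | ⟨J, j'⟩
      · obtain ⟨-, -, h3, h4⟩ := relW ⟨1, by omega⟩ le_rfl (by simp only; omega) rfl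
        have e1 : yy r n m i = y := Fin.ext (s2.trans h3.symm)
        have e2 : bb r n m i = β := s3.trans h4.symm
        subst e1 e2
        refine SW_mono r n m (ih (i + 1) (by omega)) fun e he => ?_
        rcases (mem_S r n m).mp he with ⟨a, ⟨h1, h2⟩, rfl⟩ | ⟨i', hi', rfl⟩
        · exact Finset.mem_insert_of_mem
            ((mem_S r n m).mpr (Or.inl ⟨a, ⟨h1, by omega⟩, rfl⟩))
        · rcases Nat.lt_or_ge i' i with h' | h'
          · exact Finset.mem_insert_of_mem ((mem_S r n m).mpr (Or.inr ⟨i', h', rfl⟩))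
          · obtain rfl : i' = i := by omega
            exact Finset.mem_insert_self _ _
      · exfalso
        have hj := j'.isLt
        rcases Nat.lt_or_ge j'.val i with h' | h'
        · have := hom_rel hb (Finset.mem_insert_of_mem ((mem_S r n m).mpr
            (Or.inr ⟨i - (j'.val + 1), by omega, rfl⟩))) hnew j'
            (by rw [← Nat.cast_add]; congr 1; omega) (fun h => by omega)
          exact this.2.2 ⟨by rw [hval]; exact hir, ht⟩ (by rw [hval]; omega) rfl
        · refine relW ⟨j'.val + 1 - i, by omega⟩ (by simp only; omega) (by simp only; omega)
            ⟨by rw [hval]; exact hir, ht⟩ ?_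
          rw [hval]; simp only; omega
  exact key r 0 (by omega)

/-- positions on the pigeons only -/
noncomputable def Q (f : Fin (r + 1) → Fin (r + 1)) (s : ℕ) : Finset (VA r n × VB r m) :=
  (Finset.univ.filter fun a : Fin (r + 1) => a.val < s).image (fun a => (Sum.inl a, Sum.inl (f a)))

lemma mem_Q {f : Fin (r + 1) → Fin (r + 1)} {s : ℕ} {e} : e ∈ Q r n m f s ↔
    ∃ a : Fin (r + 1), a.val < s ∧ (Sum.inl a, Sum.inl (f a)) = e := by
  simp [Q]

lemma card_Q (f : Fin (r + 1) → Fin (r + 1)) (s : ℕ) : (Q r n m f s).card ≤ s := by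
  refine Finset.card_image_le.trans ?_
  have := Finset.card_le_card_of_injOn (s := Finset.univ.filter fun a : Fin (r + 1) => a.val < s)
    (t := Finset.range s) (fun a => a.val)
    (by intro a ha; simpa using ha) (by intro a _ b _ h; exact Fin.ext h)
  simpa using this

lemma SW_empty (hr : 2 ≤ r) : SW r n m ∅ := by
  have key : ∀ d s f, s + d = r + 1 → SW r n m (Q r n m f s) := by
    intro d
    induction d with
    | zero =>
      intro s f hs
      by_cases hb : PartialHom (GA r n) (GB r m) (Q r n m f s)
      swap
      · exact SpoilerWins.win hb
      have hmem : ∀ a, (Sum.inl a, Sum.inl (f a)) ∈ Q r n m f s := fun a =>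
        (mem_Q r n m).mpr ⟨a, by have := a.isLt; omega, rfl⟩
      have hf : Function.Injective f := by
        intro a b hab
        by_contra hne
        rcases hb.2.2 (hmem a) (hmem b) (Or.inl hne) with h | h
        · exact h hab
        · exact h hab.symm
      refine SW_mono r n m (SW_start r n m hr hf) fun e he => ?_
      rcases (mem_S r n m).mp he with ⟨a, -, rfl⟩ | ⟨i', hi', -⟩
      · exact hmem a
      · omega
    | succ d ih =>
      intro s f hs
      have hsr : s < r + 1 := by omega
      refine SW_move r n m ((card_Q r n m f s).trans (by omega))
        (Sum.inl ⟨s, hsr⟩) fun b hb => ?_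
      rcases nf (hb.2.1 (Finset.mem_insert_self _ _) :
          (GB r m).color ((Sum.inl ⟨s, hsr⟩ : VA r n), b).2 =
            (GA r n).color ((Sum.inl ⟨s, hsr⟩ : VA r n), b).1) with
        ⟨a', w', h1⟩ | ⟨v, x, c, h1⟩
      · simp only [Prod.mk.injEq, Sum.inl.injEq] at h1
        obtain ⟨rfl, rfl⟩ := h1
        refine SW_mono r n m (ih (s + 1) (Function.update f ⟨s, hsr⟩ w') (by omega))
          fun e he => ?_
        obtain ⟨a, ha, rfl⟩ := (mem_Q r n m).mp he
        by_cases has : a = ⟨s, hsr⟩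
        · subst has
          rw [Function.update_self]
          exact Finset.mem_insert_self _ _
        · rw [Function.update_of_ne has]
          refine Finset.mem_insert_of_mem ((mem_Q r n m).mpr ⟨a, ?_, rfl⟩)
          have : a.val ≠ s := fun h => has (Fin.ext h)
          omega
      · simp at h1
  have := key (r + 1) 0 id (by omega)
  have h0 : Q r n m id 0 = ∅ := by simp [Q]
  rwa [h0] at this

end spoiler

end CSE

/-- for every `k ≥ 3` there are a constant `c > 0` and `n₀, m₀ ≥ 1` such
that for all `n ≥ n₀`, `m ≥ m₀` there exist finite vertex-colored graphs `A` and `B`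
with `|V(A)| ≤ c·n` and `|V(B)| ≤ c·m` such that Spoiler has a winning strategy in the
existential `k`-pebble game on `A` and `B`, and, setting `N = n^(k-1)·m^(k-1)`,
Duplicator has critical strategies `G^start, F_1, G_1, …, G_{N-2}, F_{N-1}` with
`crit(G^start) ⊆ F_1 ∖ crit(F_1)`,
`crit(G_i) ⊆ (F_{i+1} ∖ crit(F_{i+1})) ∪ (G^start ∖ crit(G^start))` and
`crit(F_i) ⊆ (G_i ∖ crit(G_i)) ∪ (G^start ∖ crit(G^start))` for `1 ≤ i ≤ N-2`. -/
theorem critical_strategy_sequence_exists (k : ℕ) (hk : 3 ≤ k) :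
    ∃ c : ℝ, 0 < c ∧ ∃ n₀ m₀ : ℕ, 0 < n₀ ∧ 0 < m₀ ∧
      ∀ n m : ℕ, n₀ ≤ n → m₀ ≤ m →
        ∃ (V₁ V₂ C : Type) (_ : Fintype V₁) (_ : Fintype V₂)
          (_ : DecidableEq V₁) (_ : DecidableEq V₂)
          (A : ColoredGraph V₁ C) (B : ColoredGraph V₂ C),
          (Fintype.card V₁ : ℝ) ≤ c * n ∧ (Fintype.card V₂ : ℝ) ≤ c * m ∧
          PebbleCG.SpoilerWins A B Set.univ Set.univ k (∅ : Finset (V₁ × V₂)) ∧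
          ∃ (GsH GsC : Set (Finset (V₁ × V₂)))
            (FH FC GH GC : ℕ → Set (Finset (V₁ × V₂))),
            PebbleCG.IsCriticalStrategy A B Set.univ Set.univ k GsH GsC ∧
            (∀ i, 1 ≤ i → i ≤ n ^ (k - 1) * m ^ (k - 1) - 1 →
              PebbleCG.IsCriticalStrategy A B Set.univ Set.univ k (FH i) (FC i)) ∧
            (∀ i, 1 ≤ i → i ≤ n ^ (k - 1) * m ^ (k - 1) - 2 →
              PebbleCG.IsCriticalStrategy A B Set.univ Set.univ k (GH i) (GC i)) ∧
            GsC ⊆ FH 1 \ FC 1 ∧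
            (∀ i, 1 ≤ i → i ≤ n ^ (k - 1) * m ^ (k - 1) - 2 →
              GC i ⊆ (FH (i + 1) \ FC (i + 1)) ∪ (GsH \ GsC)) ∧
            (∀ i, 1 ≤ i → i ≤ n ^ (k - 1) * m ^ (k - 1) - 2 →
              FC i ⊆ (GH i \ GC i) ∪ (GsH \ GsC)) := by
  obtain ⟨r, rfl⟩ : ∃ r, k = r + 1 := ⟨k - 1, by omega⟩
  have hr : 2 ≤ r := by omega
  refine ⟨((r + 1) + 6 * r + 9 * r * (2 + r * r + 2 * r) : ℕ), by positivity, 1, 1,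
    one_pos, one_pos, ?_⟩
  intro n m hn hm
  haveI : NeZero n := ⟨by omega⟩
  haveI : NeZero m := ⟨by omega⟩
  haveI : NeZero (3 * r) := ⟨by omega⟩
  have hend : 2 * (n ^ r * m ^ r) + r ≤ CSE.uend r n m := by
    unfold CSE.uend
    have h1 : (2 * n * m) ^ r = 2 ^ r * (n ^ r * m ^ r) := by
      rw [mul_assoc, mul_pow, mul_pow]
    have h2 : 2 ^ 2 ≤ 2 ^ r := Nat.pow_le_pow_right (by norm_num) hr
    have h3 : 0 < n ^ r * m ^ r := Nat.mul_pos (pow_pos hn r) (pow_pos hm r)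
    have h4 : 2 * (2 ^ 2 * (n ^ r * m ^ r)) ≤ r * (2 ^ r * (n ^ r * m ^ r)) :=
      Nat.mul_le_mul hr (Nat.mul_le_mul_right _ h2)
    rw [h1]
    omega
  simp only [Nat.add_sub_cancel]
  refine ⟨CSE.VA r n, CSE.VB r m, CSE.Col r, inferInstance, inferInstance, CSE.instDecVA r n,
    CSE.instDecVB r m, CSE.GA r n, CSE.GB r m, ?_, ?_, CSE.SW_empty r n m hr,
    CSE.H r n m 0, {CSE.P r n m 0},
    fun i => CSE.H r n m (2 * i - 1), fun i => {CSE.P r n m (2 * i - 1)},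
    fun i => CSE.H r n m (2 * i), fun i => {CSE.P r n m (2 * i)}, ?_, ?_, ?_, ?_, ?_, ?_⟩
  · have : Fintype.card (CSE.VA r n) = (r + 1) + 3 * r * (2 * n) := by
      simp [CSE.VA, ZMod.card]
    rw [this]
    norm_cast
    nlinarith [Nat.zero_le (9 * r * (2 + r * r + 2 * r) * n), Nat.mul_le_mul_left (r + 1) hn]
  · have : Fintype.card (CSE.VB r m) =
        (r + 1) + 3 * r * (3 * (m * 2 + (r + 2) * r)) := by
      simp [CSE.VB, CSE.Val, ZMod.card]
    rw [this]
    norm_cast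
    have h1 : r + 1 ≤ (r + 1) * m := Nat.le_mul_of_pos_right _ hm
    have h2 : (r + 2) * r ≤ (r + 2) * r * m := Nat.le_mul_of_pos_right _ hm
    have h3 : 3 * r * (3 * (m * 2 + (r + 2) * r)) ≤ 3 * r * (3 * (m * 2 + (r + 2) * r * m)) :=
      Nat.mul_le_mul_left _ (Nat.mul_le_mul_left _ (Nat.add_le_add_left h2 _))
    nlinarith [Nat.zero_le (6 * r * m)]
  · exact CSE.crit_strategy r n m hr (by omega)
  · intro i h1 h2
    exact CSE.crit_strategy r n m hr (by omega)
  · intro i h1 h2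
    exact CSE.crit_strategy r n m hr (by omega)
  · rintro p rfl
    exact ⟨CSE.P_mem_H r n m hr (by omega) (by omega), CSE.P_ne r n m hr 0⟩
  · rintro i h1 h2 p rfl
    refine Or.inl ⟨CSE.P_mem_H r n m hr (by omega) (by omega), ?_⟩
    have := CSE.P_ne r n m hr (2 * i)
    rw [show 2 * i + 1 = 2 * (i + 1) - 1 by omega] at this
    exact this
  · rintro i h1 h2 p rfl
    refine Or.inl ⟨CSE.P_mem_H r n m hr (by omega) (by omega), ?_⟩
    have := CSE.P_ne r n m hr (2 * i - 1)
    rw [show 2 * i - 1 + 1 = 2 * i by omega] at this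
    exact this
end
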